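/- arXiv:1108.1886 — 2 statements merged into one kernel-verified Lean document; each statement's English description precedes it below -/
import Mathlib

section
/- Let Σ be a strongly symmetric fan in ℝ^r and δ, δ' ∈ Σ with span(δ) = span(δ'). Then Star(δ) = Star(δ') as fans in ℝ^r/span(δ). -/
open scoped Classical Pointwise BigOperators

noncomputable section

abbrev Vr (r : ℕ) : Type := Fin r → ℝ

/-- The convex cone generated by a finite set of vectors. -/
def coneGen {M : Type*} [AddCommGroup M] [Module ℝ M] (s : Finset M) : Set M :=
  { x | ∃ c : M → ℝ, (∀ v, 0 ≤ c v) ∧ x = ∑ v ∈ s, c v • v }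

/-- Dimension of the linear span of a set. -/
def spanDim {M : Type*} [AddCommGroup M] [Module ℝ M] (s : Set M) : ℕ :=
  Module.finrank ℝ (Submodule.span ℝ s)

/-- A (linear) hyperplane: the kernel of a nonzero linear functional. -/
def IsHyp {M : Type*} [AddCommGroup M] [Module ℝ M] (H : Set M) : Prop :=
  ∃ f : M →ₗ[ℝ] ℝ, f ≠ 0 ∧ H = {x | f x = 0}

/-- A strongly convex rational polyhedral cone with respect to the lattice `N`. -/
def IsNCone {r : ℕ} (N : AddSubgroup (Vr r)) (σ : Set (Vr r)) : Prop :=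
  ∃ s : Finset (Vr r), ↑s ⊆ (N : Set (Vr r)) ∧ σ = coneGen s ∧ σ ∩ (-σ) ⊆ {0}

/-- `τ` is a face of `σ`. -/
def IsFaceOf {M : Type*} [AddCommGroup M] [Module ℝ M] (τ σ : Set M) : Prop :=
  ∃ m : M →ₗ[ℝ] ℝ, (∀ x ∈ σ, 0 ≤ m x) ∧ τ = σ ∩ {x | m x = 0}

/-- A fan in the lattice `N`. -/
structure IsFan {r : ℕ} (N : AddSubgroup (Vr r)) (F : Set (Set (Vr r))) : Prop where
  finite : F.Finite
  nonempty : F.Nonempty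
  cones : ∀ σ ∈ F, IsNCone N σ
  faces : ∀ σ ∈ F, ∀ τ : Set (Vr r), IsFaceOf τ σ → τ ∈ F
  inter : ∀ σ₁ ∈ F, ∀ σ₂ ∈ F, IsFaceOf (σ₁ ∩ σ₂) σ₁ ∧ IsFaceOf (σ₁ ∩ σ₂) σ₂

/-- Completeness: the support is everything. -/
def FanComplete {M : Type*} (F : Set (Set M)) : Prop := ⋃₀ F = Set.univ

/-- Strong symmetry: complete, and the support of the codimension-one cones is a
finite union of hyperplanes. -/
def SSymm {M : Type*} [AddCommGroup M] [Module ℝ M] (F : Set (Set M)) : Prop :=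
  FanComplete F ∧ ∃ Hs : Finset (Set M), (∀ h ∈ Hs, IsHyp h) ∧
    ⋃₀ {τ ∈ F | spanDim τ = Module.finrank ℝ M - 1} = ⋃₀ ↑Hs

/-- Central symmetry. -/
def CSymm {M : Type*} [AddCommGroup M] (F : Set (Set M)) : Prop := ∀ σ ∈ F, -σ ∈ F

/-- `b` is a ℤ-basis of the subgroup `L` of `ℝ^r`. -/
def IsZBasis {r d : ℕ} (L : AddSubgroup (Vr r)) (b : Fin d → Vr r) : Prop :=
  LinearIndependent ℝ b ∧ AddSubgroup.closure (Set.range b) = L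

/-- A (full-rank) lattice in `ℝ^r`. -/
def IsLattice {r : ℕ} (N : AddSubgroup (Vr r)) : Prop :=
  ∃ b : Fin r → Vr r, IsZBasis N b

/-- A cone generated by a part of a ℤ-basis of `L`. -/
def SmoothCone {r : ℕ} (L : AddSubgroup (Vr r)) (σ : Set (Vr r)) : Prop :=
  ∃ (d : ℕ) (b : Fin d → Vr r) (s : Finset (Fin d)),
    IsZBasis L b ∧ σ = coneGen (s.image b)

/-- Chambers of an arrangement: connected components of the complement. -/
def chambers {r : ℕ} (A : Finset (Set (Vr r))) : Set (Set (Vr r)) :=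
  { K | ∃ x ∈ (⋃₀ (A : Set (Set (Vr r))))ᶜ,
      K = connectedComponentIn (⋃₀ (A : Set (Set (Vr r))))ᶜ x }

/-- An open simplicial cone of full dimension. -/
def IsOpenSimplicialCone {r : ℕ} (K : Set (Vr r)) : Prop :=
  ∃ b : Fin r → Vr r, LinearIndependent ℝ b ∧
    K = { x | ∃ c : Fin r → ℝ, (∀ i, 0 < c i) ∧ x = ∑ i, c i • b i }

def ker0 {r : ℕ} (α : Vr r →ₗ[ℝ] ℝ) : Set (Vr r) := {x | α x = 0}

/-- Walls of a chamber `K`. -/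
def walls {r : ℕ} (A : Finset (Set (Vr r))) (K : Set (Vr r)) : Set (Set (Vr r)) :=
  { H | H ∈ A ∧ spanDim (H ∩ closure K) = r - 1 }

/-- The set `B^K` of inward-pointing normals of the walls of `K`. -/
def BK {r : ℕ} (A : Finset (Set (Vr r))) (R : Finset (Vr r →ₗ[ℝ] ℝ)) (K : Set (Vr r)) :
    Finset (Vr r →ₗ[ℝ] ℝ) :=
  R.filter (fun α => ker0 α ∈ walls A K ∧ K ⊆ {x | 0 ≤ α x})

/-- A crystallographic arrangement `(A, R)`. -/
structure IsCrystArr {r : ℕ} (A : Finset (Set (Vr r))) (R : Finset (Vr r →ₗ[ℝ] ℝ)) : Prop where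
  simplicial : ∀ K ∈ chambers A, IsOpenSimplicialCone K
  hyps : (A : Set (Set (Vr r))) = (fun α => ker0 α) '' (R : Set (Vr r →ₗ[ℝ] ℝ))
  nonzero : ∀ α ∈ R, α ≠ 0
  neg_mem : ∀ α ∈ R, -α ∈ R
  reduced : ∀ α ∈ R, ∀ β ∈ R, (∃ c : ℝ, β = c • α) → β = α ∨ β = -α
  integral : ∀ K ∈ chambers A, ∀ β ∈ R,
    β ∈ Submodule.span ℤ ((BK A R K : Set (Vr r →ₗ[ℝ] ℝ)))

/-- The set of all intersections of closed chambers of `A`. -/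
def closedChamberInts {r : ℕ} (A : Finset (Set (Vr r))) : Set (Set (Vr r)) :=
  { σ | ∃ S : Set (Set (Vr r)), S.Nonempty ∧ S ⊆ chambers A ∧ σ = ⋂₀ (closure '' S) }

/-- The lattice dual to `M_R = ∑_{α ∈ R} ℤ α`. -/
def dualLattice {r : ℕ} (R : Finset (Vr r →ₗ[ℝ] ℝ)) : AddSubgroup (Vr r) where
  carrier := { x | ∀ α ∈ R, ∃ k : ℤ, α x = k }
  zero_mem' := fun α _ => ⟨0, by simp⟩
  add_mem' := by
    intro x y hx hy α hα
    obtain ⟨k, hk⟩ := hx α hα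
    obtain ⟨m, hm⟩ := hy α hα
    exact ⟨k + m, by simp [hk, hm]⟩
  neg_mem' := by
    intro x hx α hα
    obtain ⟨k, hk⟩ := hx α hα
    exact ⟨-k, by simp [hk]⟩

/-- The star fan of `δ`, as a collection of cones in the quotient by `E`. -/
def starAt {r : ℕ} (F : Set (Set (Vr r))) (δ : Set (Vr r)) (E : Submodule ℝ (Vr r)) :
    Set (Set (Vr r ⧸ E)) :=
  { τ | ∃ σ ∈ F, δ ⊆ σ ∧ τ = E.mkQ '' σ }

/-- The positive roots `R_+^K` at the chamber `K`. -/
def RplusF {r : ℕ} (A : Finset (Set (Vr r))) (R : Finset (Vr r →ₗ[ℝ] ℝ)) (K : Set (Vr r)) :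
    Finset (Vr r →ₗ[ℝ] ℝ) :=
  R.filter (fun α => α ∈ coneGen (BK A R K))

/-- `ρ^K`, the half-sum of the positive roots at `K`. -/
def rhoK {r : ℕ} (A : Finset (Set (Vr r))) (R : Finset (Vr r →ₗ[ℝ] ℝ)) (K : Set (Vr r)) :
    Vr r →ₗ[ℝ] ℝ :=
  (1/2 : ℝ) • ∑ α ∈ RplusF A R K, α

end

open Filter Topology in
lemma aux_small {V : Type*} [AddCommGroup V] [Module ℝ V] [TopologicalSpace V]
    [ContinuousAdd V] [ContinuousSMul ℝ V] (q y : V) :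
    Tendsto (fun t : ℝ => q + t • y) (𝓝[>] 0) (𝓝 q) := by
  have h : Continuous (fun t : ℝ => q + t • y) := by fun_prop
  have := (h.tendsto 0).mono_left (nhdsWithin_le_nhds (s := Set.Ioi 0))
  simpa using this

/-- Pigeonhole along a ray. -/
lemma aux_ray {r : ℕ} (G : Set (Set (Vr r))) (hG : G.Finite) (hc : ∀ σ ∈ G, IsClosed σ)
    (q y : Vr r) (h : ∀ t : ℝ, 0 < t → t ≤ 1 → q + t • y ∈ ⋃₀ G) :
    ∃ σ ∈ G, q ∈ σ ∧ ∃ t : ℝ, 0 < t ∧ t ≤ 1 ∧ q + t • y ∈ σ := by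
  by_contra hcon
  push Not at hcon
  have h1 : ∀ σ ∈ G, ∀ᶠ t : ℝ in nhdsWithin 0 (Set.Ioi 0), q + t • y ∉ σ := by
    intro σ hσ
    by_cases hq : q ∈ σ
    · have : Set.Ioc (0:ℝ) 1 ∈ nhdsWithin (0:ℝ) (Set.Ioi 0) := Ioc_mem_nhdsGT (by norm_num)
      filter_upwards [this] with t ht
      exact hcon σ hσ hq t ht.1 ht.2
    · exact (aux_small q y).eventually ((hc σ hσ).isOpen_compl.mem_nhds hq)
  have h2 := (Filter.eventually_all_finite hG).2 h1
  have h3 : Set.Ioc (0:ℝ) 1 ∈ nhdsWithin (0:ℝ) (Set.Ioi 0) := Ioc_mem_nhdsGT (by norm_num)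
  obtain ⟨t, ht, ht'⟩ := (h2.and h3).exists
  obtain ⟨σ, hσ, hm⟩ := h t ht'.1 ht'.2
  exact ht σ hσ hm

lemma aux_avoid {V : Type*} [AddCommGroup V] [Module ℝ V] (P : Set (Submodule ℝ V))
    (hP : P.Finite) (ht : ∀ p ∈ P, p ≠ ⊤) : ∃ u : V, ∀ p ∈ P, u ∉ p := by
  have := Subspace.biUnion_ne_univ_of_top_notMem (k := ℝ) (E := V) (s := hP.toFinset)
    (by intro h; exact ht ⊤ (by simpa using h) rfl)
  rw [Set.ne_univ_iff_exists_notMem] at this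
  obtain ⟨u, hu⟩ := this
  refine ⟨u, fun p hp hup => hu ?_⟩
  simp only [Set.mem_iUnion]
  exact ⟨p, by simpa using hp, hup⟩

lemma aux_avoid_open {r : ℕ} (P : Set (Submodule ℝ (Vr r)))
    (hP : P.Finite) (ht : ∀ p ∈ P, p ≠ ⊤) (U : Set (Vr r)) (hU : IsOpen U) (y : Vr r)
    (hy : y ∈ U) : ∃ u ∈ U, ∀ p ∈ P, u ∉ p := by
  obtain ⟨u, hu⟩ := aux_avoid P hP ht
  have h1 : ∀ p ∈ P, ∀ᶠ t : ℝ in nhdsWithin 0 (Set.Ioi 0), y + t • u ∉ p := by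
    intro p hp
    by_cases hq : y ∈ p
    · filter_upwards [self_mem_nhdsWithin] with t ht hm
      have ht : (0:ℝ) < t := ht
      have h2 : t • u ∈ p := (Submodule.add_mem_iff_right p hq).1 hm
      exact hu p hp ((Submodule.smul_mem_iff p ht.ne').1 h2)
    · exact (aux_small y u).eventually
        ((Submodule.closed_of_finiteDimensional p).isOpen_compl.mem_nhds hq)
  have h2 := (Filter.eventually_all_finite hP).2 h1
  obtain ⟨t, ht, ht'⟩ := (h2.and ((aux_small y u).eventually (hU.mem_nhds hy))).exists
  exact ⟨_, ht', ht⟩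

lemma coneGen_zero {M : Type*} [AddCommGroup M] [Module ℝ M] (s : Finset M) :
    (0 : M) ∈ coneGen s := ⟨0, by simp, by simp⟩

lemma coneGen_add {M : Type*} [AddCommGroup M] [Module ℝ M] {s : Finset M} {x y : M}
    (hx : x ∈ coneGen s) (hy : y ∈ coneGen s) : x + y ∈ coneGen s := by
  obtain ⟨c, hc, rfl⟩ := hx
  obtain ⟨d, hd, rfl⟩ := hy
  exact ⟨c + d, fun v => add_nonneg (hc v) (hd v), by
    simp [add_smul, Finset.sum_add_distrib]⟩

lemma coneGen_smul {M : Type*} [AddCommGroup M] [Module ℝ M] {s : Finset M} {x : M} {t : ℝ}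
    (ht : 0 ≤ t) (hx : x ∈ coneGen s) : t • x ∈ coneGen s := by
  obtain ⟨c, hc, rfl⟩ := hx
  exact ⟨t • c, fun v => mul_nonneg ht (hc v), by
    simp [mul_smul, Finset.smul_sum]⟩

lemma coneGen_gen {M : Type*} [AddCommGroup M] [Module ℝ M] {s : Finset M} {v : M}
    (hv : v ∈ s) : v ∈ coneGen s := by
  refine ⟨fun w => if w = v then 1 else 0, fun w => by dsimp only; split_ifs <;> norm_num, ?_⟩
  simp [hv]

lemma coneGen_closed {r : ℕ} (s : Finset (Vr r)) (hp : coneGen s ∩ (-coneGen s) ⊆ {0}) :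
    IsClosed (coneGen s) := by
  -- drop zero
  set s' := s.erase 0 with hs'
  let L : (s' → ℝ) →ₗ[ℝ] Vr r := Fintype.linearCombination ℝ (fun v : s' => (v : Vr r))
  have hL : ∀ a, L a = ∑ v : s', a v • (v : Vr r) := fun a => rfl
  have hLc : Continuous L := L.continuous_of_finiteDimensional
  let P : Set (s' → ℝ) := {a | ∀ v, 0 ≤ a v}
  have hPc : IsClosed P := by
    have : P = ⋂ v, {a | 0 ≤ a v} := by ext; simp [P]
    rw [this]
    exact isClosed_iInter fun v => isClosed_le continuous_const (continuous_apply v)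
  have himg : coneGen s = L '' P := by
    ext x
    constructor
    · rintro ⟨c, hc, rfl⟩
      refine ⟨fun v => c v, fun v => hc v, ?_⟩
      rw [hL, Finset.sum_coe_sort s' (fun v => c v • v), hs']
      exact Finset.sum_erase s (by simp)
    · rintro ⟨a, ha, rfl⟩
      refine ⟨fun v => if h : v ∈ s' then a ⟨v, h⟩ else 0, ?_, ?_⟩
      · intro v
        dsimp only
        split_ifs
        · exact ha _
        · exact le_rfl
      · rw [hL, ← Finset.sum_erase s (a := (0 : Vr r)) (by simp), ← hs', ← Finset.sum_coe_sort s']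
        exact Finset.sum_congr rfl fun v _ => by simp
  have hinj : ∀ a ∈ P, L a = 0 → a = 0 := by
    intro a ha h0
    by_contra hne
    obtain ⟨v, hv⟩ := Function.ne_iff.1 hne
    have hv' : 0 < a v := lt_of_le_of_ne (ha v) (fun h => hv (by simpa using h.symm))
    have h1 : a v • (v : Vr r) ∈ coneGen s :=
      coneGen_smul (ha v) (coneGen_gen (Finset.mem_of_mem_erase v.2))
    have h2 : -(a v • (v : Vr r)) ∈ coneGen s := by
      rw [himg]
      refine ⟨Function.update a v 0, ?_, ?_⟩
      · intro w
        by_cases hw : w = v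
        · subst hw; simp
        · simpa [hw] using ha w
      · have : Function.update a v 0 = a - Pi.single v (a v) := by
          ext w
          by_cases hw : w = v
          · subst hw; simp
          · simp [hw]
        rw [this, map_sub, h0, zero_sub, neg_inj]
        simp [L, Fintype.linearCombination_apply_single]
    have h3 := hp ⟨h1, by simpa using h2⟩
    have h4 : (v : Vr r) = 0 := by
      rcases smul_eq_zero.1 (Set.mem_singleton_iff.1 h3) with h | h
      · exact absurd h hv'.ne'
      · exact h
    exact (Finset.ne_of_mem_erase v.2) h4
  obtain ⟨c, hc, hcL⟩ : ∃ c : ℝ, 0 < c ∧ ∀ a ∈ P, c * ‖a‖ ≤ ‖L a‖ := by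
    have hK : IsCompact (P ∩ Metric.sphere 0 1) := (isCompact_sphere _ _).inter_left hPc
    by_cases hne : (P ∩ Metric.sphere 0 1).Nonempty
    · obtain ⟨a0, ha0, hmin⟩ := hK.exists_isMinOn hne (f := fun a => ‖L a‖) (by fun_prop)
      refine ⟨‖L a0‖, ?_, ?_⟩
      · rw [norm_pos_iff]
        intro h
        have := hinj a0 ha0.1 h
        have h5 := ha0.2
        rw [this] at h5
        simp at h5
      · intro a ha
        by_cases h0 : a = 0
        · simp [h0]
        have hn : 0 < ‖a‖ := norm_pos_iff.2 h0
        have hmem : ‖a‖⁻¹ • a ∈ P ∩ Metric.sphere 0 1 := by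
          refine ⟨fun v => mul_nonneg (inv_nonneg.2 hn.le) (ha v), ?_⟩
          simp [norm_smul, hn.ne']
        have := hmin hmem
        simp only [Set.mem_ofPred_eq, map_smul, norm_smul, norm_inv, norm_norm] at this
        rw [inv_mul_eq_div, le_div_iff₀ hn] at this
        exact this
    · refine ⟨1, one_pos, fun a ha => ?_⟩
      by_cases h0 : a = 0
      · simp [h0]
      exfalso
      have hn : 0 < ‖a‖ := norm_pos_iff.2 h0
      refine hne ⟨‖a‖⁻¹ • a, fun v => mul_nonneg (inv_nonneg.2 hn.le) (ha v), ?_⟩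
      simp [norm_smul, hn.ne']
  rw [himg]
  rw [← closure_subset_iff_isClosed]
  intro x hx
  have hK : IsCompact (L '' (P ∩ Metric.closedBall 0 ((‖x‖ + 1) / c))) :=
    ((isCompact_closedBall _ _).inter_left hPc).image hLc
  have hx2 : x ∈ closure (L '' (P ∩ Metric.closedBall 0 ((‖x‖ + 1) / c))) := by
    rw [mem_closure_iff_nhds] at hx ⊢
    intro t ht
    obtain ⟨z, ⟨hz1, hz2⟩, ⟨a, ha, rfl⟩⟩ := hx (t ∩ Metric.ball x 1)
      (Filter.inter_mem ht (Metric.ball_mem_nhds x one_pos))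
    refine ⟨L a, hz1, a, ⟨ha, ?_⟩, rfl⟩
    rw [mem_closedBall_zero_iff, le_div_iff₀ hc, mul_comm]
    refine (hcL a ha).trans ?_
    have : ‖L a - x‖ < 1 := by simpa [dist_eq_norm] using hz2
    have h6 := norm_le_norm_add_norm_sub' (L a) x
    linarith
  rw [hK.isClosed.closure_eq] at hx2
  exact Set.image_mono Set.inter_subset_left hx2

/-- The properties of cones of a fan that are used. -/
structure AuxCone {r : ℕ} (σ : Set (Vr r)) : Prop where
  closed : IsClosed σ
  add : ∀ x ∈ σ, ∀ y ∈ σ, x + y ∈ σ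
  smul : ∀ t : ℝ, 0 ≤ t → ∀ x ∈ σ, t • x ∈ σ

lemma aux_cone {r : ℕ} {N : AddSubgroup (Vr r)} {σ : Set (Vr r)} (h : IsNCone N σ) :
    AuxCone σ := by
  obtain ⟨s, -, rfl, hp⟩ := h
  exact ⟨coneGen_closed s hp, fun x hx y hy => coneGen_add hx hy,
    fun t ht x hx => coneGen_smul ht hx⟩

/-- `σ` is the smallest cone of `F` containing `q`. -/
structure MinC {r : ℕ} (F : Set (Set (Vr r))) (σ : Set (Vr r)) (q : Vr r) : Prop where
  memF : σ ∈ F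
  mem : q ∈ σ
  le : ∀ σ' ∈ F, q ∈ σ' → σ ⊆ σ'

lemma minC_of_cone {r : ℕ} {N : AddSubgroup (Vr r)} {F : Set (Set (Vr r))} (hfan : IsFan N F)
    {σ : Set (Vr r)} (hσ : σ ∈ F) : ∃ q, MinC F σ q := by
  obtain ⟨s, -, hs, -⟩ := hfan.cones σ hσ
  have hq : (∑ v ∈ s, v) ∈ σ := by
    rw [hs]
    exact ⟨fun _ => 1, fun _ => zero_le_one, by simp⟩
  refine ⟨∑ v ∈ s, v, hσ, hq, fun σ' hσ' hq' => ?_⟩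
  obtain ⟨⟨m, hm, heq⟩, -⟩ := hfan.inter σ hσ σ' hσ'
  have h0 : m (∑ v ∈ s, v) = 0 := by
    have : (∑ v ∈ s, v) ∈ σ ∩ σ' := ⟨hq, hq'⟩
    rw [heq] at this
    exact this.2
  rw [map_sum] at h0
  have h1 := (Finset.sum_eq_zero_iff_of_nonneg
    (fun v hv => hm v (by rw [hs]; exact coneGen_gen hv))).1 h0
  intro x hx
  have hmx : m x = 0 := by
    rw [hs] at hx
    obtain ⟨c, hc, rfl⟩ := hx
    rw [map_sum]
    exact Finset.sum_eq_zero fun v hv => by rw [map_smul, h1 v hv, smul_zero]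
  have : x ∈ σ ∩ σ' := by rw [heq]; exact ⟨hx, hmx⟩
  exact this.2

lemma minC_of_pt {r : ℕ} {N : AddSubgroup (Vr r)} {F : Set (Set (Vr r))} (hfan : IsFan N F)
    (hc : FanComplete F) (q : Vr r) : ∃ σ, MinC F σ q := by
  have hq : q ∈ ⋃₀ F := by rw [hc]; trivial
  obtain ⟨σ0, h0, hq0⟩ := hq
  obtain ⟨σ, hσ⟩ := (hfan.finite.subset (Set.sep_subset F (fun σ => q ∈ σ))).exists_minimal
    ⟨σ0, h0, hq0⟩
  refine ⟨σ, hσ.prop.1, hσ.prop.2, fun σ' hσ' hq' => ?_⟩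
  have h1 : σ ∩ σ' ∈ F := hfan.faces σ hσ.prop.1 _ (hfan.inter σ hσ.prop.1 σ' hσ').1
  have h2 := hσ.le_of_le ⟨h1, hσ.prop.2, hq'⟩ Set.inter_subset_left
  exact fun x hx => (h2 hx).2

/-- Weak sign domination. -/
def TS {r : ℕ} {ι : Type*} (f : ι → Vr r →ₗ[ℝ] ℝ) (q x : Vr r) : Prop :=
  ∀ i, (f i q = 0 → f i x = 0) ∧ 0 ≤ f i q * f i x

section main

variable {r : ℕ} {N : AddSubgroup (Vr r)} {F : Set (Set (Vr r))} {ι : Type*}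
  {f : ι → Vr r →ₗ[ℝ] ℝ}

lemma cone_zero (hfan : IsFan N F) (hS : ⋃₀ {τ ∈ F | spanDim τ = r - 1} = ⋃ i, {x | f i x = 0})
    (hf : ∀ i, f i ≠ 0) {σ : Set (Vr r)} {q x : Vr r} (h : MinC F σ q) (hx : x ∈ σ) (i : ι)
    (hi : f i q = 0) : f i x = 0 := by
  by_contra hxi
  let H := LinearMap.ker (f i)
  have hdim : Module.finrank ℝ H = r - 1 := by
    have := Module.Dual.finrank_ker_add_one_of_ne_zero (f := f i) (hf i)
    rw [Module.finrank_fin_fun] at this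
    change Module.finrank ℝ (LinearMap.ker (f i)) = r - 1
    omega
  let G : Set (Set (Vr r)) := {τ ∈ F | spanDim τ = r - 1}
  have hGfin : G.Finite := hfan.finite.subset (Set.sep_subset _ _)
  let P : Set (Submodule ℝ H) :=
    (fun τ => (Submodule.span ℝ τ).comap H.subtype) '' {τ ∈ G | q ∈ τ}
  obtain ⟨y, hy⟩ := aux_avoid P ((hGfin.subset (Set.sep_subset _ _)).image _) (by
    rintro _ ⟨τ, ⟨⟨hτF, hτd⟩, hqτ⟩, rfl⟩ htop
    dsimp only at htop
    have hle : H ≤ Submodule.span ℝ τ := by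
      intro z hz
      have : (⟨z, hz⟩ : H) ∈ (Submodule.span ℝ τ).comap H.subtype := by rw [htop]; trivial
      exact this
    have heq : H = Submodule.span ℝ τ := Submodule.eq_of_le_of_finrank_eq hle (by
      rw [hdim]; exact hτd.symm)
    have : x ∈ H := by rw [heq]; exact Submodule.subset_span (h.le τ hτF hqτ hx)
    exact hxi this)
  obtain ⟨τ, hτ, hqτ, t, ht, -, hmem⟩ := aux_ray G hGfin
    (fun σ hσ => (aux_cone (hfan.cones σ hσ.1)).closed) q (y : Vr r) (by
    intro t _ _
    change _ ∈ ⋃₀ {τ ∈ F | spanDim τ = r - 1}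
    rw [hS]
    refine Set.mem_iUnion.2 ⟨i, ?_⟩
    have hy0 : f i (y : Vr r) = 0 := y.2
    simp [hi, hy0])
  refine hy _ ⟨τ, ⟨hτ, hqτ⟩, rfl⟩ ?_
  have h1 : t • (y : Vr r) ∈ Submodule.span ℝ τ :=
    (Submodule.add_mem_iff_right _ (Submodule.subset_span hqτ)).1 (Submodule.subset_span hmem)
  exact (Submodule.smul_mem_iff _ ht.ne').1 h1

lemma cone_sub (hfan : IsFan N F) (hS : ⋃₀ {τ ∈ F | spanDim τ = r - 1} = ⋃ i, {x | f i x = 0})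
    (hf : ∀ i, f i ≠ 0) {σ : Set (Vr r)} {q x : Vr r} (h : MinC F σ q) (hx : x ∈ σ) :
    TS f q x := by
  intro i
  refine ⟨cone_zero hfan hS hf h hx i, ?_⟩
  by_contra hneg
  push Not at hneg
  have hC := aux_cone (hfan.cones σ h.memF)
  have ha : f i q ≠ 0 := by rintro h0; simp [h0] at hneg
  set q2 : Vr r := (f i q) ^ 2 • x + (-(f i q * f i x)) • q with hq2
  have hmin : MinC F σ q2 := by
    refine ⟨h.memF, hC.add _ (hC.smul _ (sq_nonneg _) _ hx) _ (hC.smul _ (by linarith) _ h.mem),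
      fun σ' hσ' hm => h.le σ' hσ' ?_⟩
    obtain ⟨⟨m, hm0, heq⟩, -⟩ := hfan.inter σ h.memF σ' hσ'
    have h1 : q2 ∈ σ ∩ σ' := ⟨hC.add _ (hC.smul _ (sq_nonneg _) _ hx) _
      (hC.smul _ (by linarith) _ h.mem), hm⟩
    rw [heq] at h1
    have h2 : m q2 = 0 := h1.2
    rw [hq2, map_add, map_smul, map_smul, smul_eq_mul, smul_eq_mul] at h2
    have h3 := hm0 x hx
    have h4 := hm0 q h.mem
    have h5 : 0 ≤ f i q ^ 2 * m x := by positivity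
    have h6 : m q = 0 := by
      by_contra h7
      have h8 : 0 < m q := lt_of_le_of_ne h4 (Ne.symm h7)
      have := mul_pos (neg_pos.2 hneg) h8
      linarith
    have h9 : q ∈ σ ∩ σ' := by rw [heq]; exact ⟨h.mem, h6⟩
    exact h9.2
  have := cone_zero hfan hS hf hmin hx i (by
    simp only [hq2, map_add, map_smul, smul_eq_mul]; ring)
  simp [this] at hneg

lemma full_sup (hfan : IsFan N F) (hc : FanComplete F) (q : Vr r) :
    ∃ σ ∈ F, q ∈ σ ∧ Submodule.span ℝ σ = ⊤ := by
  obtain ⟨y, hy⟩ := aux_avoid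
    ((fun τ => Submodule.span ℝ τ) '' {τ ∈ F | Submodule.span ℝ τ ≠ ⊤})
    ((hfan.finite.subset (Set.sep_subset _ _)).image _) (by rintro _ ⟨τ, hτ, rfl⟩; exact hτ.2)
  obtain ⟨τ, hτ, hqτ, t, ht, -, hmem⟩ := aux_ray F hfan.finite
    (fun σ hσ => (aux_cone (hfan.cones σ hσ)).closed) q y (by
      intro t _ _; rw [hc]; trivial)
  refine ⟨τ, hτ, hqτ, ?_⟩
  by_contra hne
  refine hy _ ⟨τ, ⟨hτ, hne⟩, rfl⟩ ?_
  have h1 : t • y ∈ Submodule.span ℝ τ :=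
    (Submodule.add_mem_iff_right _ (Submodule.subset_span hqτ)).1 (Submodule.subset_span hmem)
  exact (Submodule.smul_mem_iff _ ht.ne').1 h1

lemma full_cell [Finite ι] (hfan : IsFan N F) (hc : FanComplete F)
    (hS : ⋃₀ {τ ∈ F | spanDim τ = r - 1} = ⋃ i, {x | f i x = 0})
    {σ : Set (Vr r)} {w : Vr r} (h : MinC F σ w)
    (hfull : Submodule.span ℝ σ = ⊤) (y0 : Vr r) (hy0 : ∀ i, 0 < f i w * f i y0) : y0 ∈ σ := by
  by_contra hy0σ
  have hC := aux_cone (hfan.cones σ h.memF)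
  let U : Set (Vr r) := σᶜ ∩ ⋂ i, {y | 0 < f i w * f i y}
  have hU : IsOpen U := by
    refine hC.closed.isOpen_compl.inter (isOpen_iInter_of_finite fun i => ?_)
    exact isOpen_lt continuous_const
      (continuous_const.mul (f i).continuous_of_finiteDimensional)
  let P : Set (Submodule ℝ (Vr r)) := (fun τ => Submodule.span ℝ τ ⊔ Submodule.span ℝ {w}) ''
    {τ ∈ F | spanDim τ + 2 ≤ r}
  obtain ⟨y, ⟨hyσ, hyf⟩, hy⟩ := aux_avoid_open P
    ((hfan.finite.subset (Set.sep_subset _ _)).image _) (by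
      rintro _ ⟨τ, ⟨-, hτ⟩, rfl⟩ htop
      have h1 := Submodule.finrank_add_le_finrank_add_finrank
        (Submodule.span ℝ τ) (Submodule.span ℝ {w})
      dsimp only at htop
      rw [htop, finrank_top] at h1
      have h2 := finrank_span_le_card (R := ℝ) ({w} : Set (Vr r))
      simp at h1 h2
      unfold spanDim at hτ
      omega) U hU y0 ⟨hy0σ, Set.mem_iInter.2 hy0⟩
  have hyf : ∀ i, 0 < f i w * f i y := fun i => Set.mem_iInter.1 hyf i
  -- the last point of the segment in σ
  let g : ℝ → Vr r := fun s => w + s • (y - w)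
  have hg : Continuous g := by fun_prop
  have hK : IsCompact (Set.Icc (0:ℝ) 1 ∩ g ⁻¹' σ) :=
    isCompact_Icc.inter_right (hC.closed.preimage hg)
  obtain ⟨s0, ⟨⟨hs00, hs01⟩, hs0σ⟩, hmax⟩ := hK.exists_isGreatest ⟨0, by simp [g, h.mem]⟩
  have hs1 : s0 < 1 := by
    refine lt_of_le_of_ne hs01 ?_
    rintro rfl
    apply hyσ
    simpa [g] using hs0σ
  obtain ⟨σ2, hσ2, hz2, t, ht, ht1, htm⟩ := aux_ray F hfan.finite
    (fun σ hσ => (aux_cone (hfan.cones σ hσ)).closed) (g s0) ((1 - s0) • (y - w)) (by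
      intro t _ _; rw [hc]; trivial)
  have htg : g s0 + t • (1 - s0) • (y - w) = g (s0 + t * (1 - s0)) := by
    simp only [g]; module
  rw [htg] at htm
  have hnot : g (s0 + t * (1 - s0)) ∉ σ := by
    intro hin
    have h1 : 0 < t * (1 - s0) := mul_pos ht (by linarith)
    have := hmax ⟨⟨by linarith, by nlinarith⟩, hin⟩
    linarith
  obtain ⟨κ, hκ⟩ := minC_of_pt hfan hc (g s0)
  have hκσ := hκ.le σ h.memF hs0σ
  have hκ2 := hκ.le σ2 hσ2 hz2
  have hκtop : Submodule.span ℝ κ ≠ ⊤ := by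
    intro htop
    obtain ⟨-, ⟨m, -, heq⟩⟩ := hfan.inter σ h.memF σ2 hσ2
    have h1 : Submodule.span ℝ κ ≤ LinearMap.ker m := by
      rw [Submodule.span_le]
      intro x hx
      have : x ∈ σ ∩ σ2 := ⟨hκσ hx, hκ2 hx⟩
      rw [heq] at this
      exact this.2
    rw [htop] at h1
    apply hnot
    have : g (s0 + t * (1 - s0)) ∈ σ ∩ σ2 := by
      rw [heq]
      exact ⟨htm, h1 trivial⟩
    exact this.1
  have hlt : spanDim κ < r := by
    have := Submodule.finrank_lt (lt_top_iff_ne_top.2 hκtop).ne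
    simpa [spanDim] using this
  by_cases hd : spanDim κ = r - 1
  · have : g s0 ∈ ⋃₀ {τ ∈ F | spanDim τ = r - 1} := ⟨κ, ⟨hκ.memF, hd⟩, hκ.mem⟩
    rw [hS] at this
    obtain ⟨i, hi⟩ := Set.mem_iUnion.1 this
    have hi : f i (g s0) = 0 := hi
    simp only [g, map_add, map_smul, map_sub, smul_eq_mul] at hi
    have hyi := hyf i
    have hwi : f i w ≠ 0 := by rintro h0; simp [h0] at hyi
    have h1 : 0 < f i w * f i w := mul_self_pos.2 hwi
    have h2 : (1 - s0) * (f i w * f i w) + s0 * (f i w * f i y) = 0 := by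
      linear_combination (f i w) * hi
    have h3 : 0 < (1 - s0) * (f i w * f i w) := mul_pos (by linarith) h1
    have h4 : 0 ≤ s0 * (f i w * f i y) := mul_nonneg hs00 hyi.le
    linarith
  · have hs0 : s0 ≠ 0 := by
      rintro rfl
      apply hκtop
      have : σ ⊆ κ := h.le κ hκ.memF (by simpa [g] using hκ.mem)
      rw [eq_top_iff, ← hfull]
      exact Submodule.span_mono this
    refine hy _ ⟨κ, ⟨hκ.memF, by omega⟩, rfl⟩ ?_
    have h1 : g s0 ∈ Submodule.span ℝ κ ⊔ Submodule.span ℝ {w} :=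
      Submodule.mem_sup_left (Submodule.subset_span hκ.mem)
    have h2 : w ∈ Submodule.span ℝ κ ⊔ Submodule.span ℝ {w} :=
      Submodule.mem_sup_right (Submodule.mem_span_singleton_self w)
    have h3 : s0 • y ∈ Submodule.span ℝ κ ⊔ Submodule.span ℝ {w} := by
      have : s0 • y = g s0 - (1 - s0) • w := by simp only [g]; module
      rw [this]
      exact Submodule.sub_mem _ h1 (Submodule.smul_mem _ _ h2)
    exact (Submodule.smul_mem_iff _ hs0).1 h3

lemma full_sub [Finite ι] (hfan : IsFan N F) (hc : FanComplete F)
    (hS : ⋃₀ {τ ∈ F | spanDim τ = r - 1} = ⋃ i, {x | f i x = 0}) (hf : ∀ i, f i ≠ 0)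
    {σ : Set (Vr r)} (hσ : σ ∈ F) (hfull : Submodule.span ℝ σ = ⊤)
    {q x : Vr r} (hq : q ∈ σ) (hx : TS f q x) : x ∈ σ := by
  obtain ⟨w, h⟩ := minC_of_cone hfan hσ
  have hC := aux_cone (hfan.cones σ h.memF)
  have hw : ∀ i, f i w ≠ 0 := by
    intro i h0
    apply hf i
    have : Submodule.span ℝ σ ≤ LinearMap.ker (f i) := by
      rw [Submodule.span_le]
      intro z hz
      exact cone_zero hfan hS hf h hz i h0
    rw [hfull] at this
    exact LinearMap.ext fun z => this (Submodule.mem_top (x := z))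
  have hwq := cone_sub hfan hS hf h hq
  have hwx : ∀ i, 0 ≤ f i w * f i x := by
    intro i
    by_cases h0 : f i q = 0
    · simp [(hx i).1 h0]
    have h1 := (hwq i).2
    have h2 := (hx i).2
    have h3 : 0 < f i q * f i q := mul_self_pos.2 h0
    have h4 : 0 ≤ (f i q * f i q) * (f i w * f i x) := by
      have := mul_nonneg h1 h2
      linarith
    exact nonneg_of_mul_nonneg_right h4 h3
  have hmem : ∀ᶠ t : ℝ in nhdsWithin 0 (Set.Ioi 0), x + t • w ∈ σ := by
    filter_upwards [self_mem_nhdsWithin] with t ht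
    have ht : (0:ℝ) < t := ht
    refine full_cell hfan hc hS h hfull _ fun i => ?_
    have h1 := hwx i
    have h3 : 0 < t * (f i w * f i w) := mul_pos ht (mul_self_pos.2 (hw i))
    simp only [map_add, map_smul, smul_eq_mul]
    linarith
  exact hC.closed.mem_of_tendsto (aux_small x w) hmem

lemma cone_eq [Finite ι] (hfan : IsFan N F) (hc : FanComplete F)
    (hS : ⋃₀ {τ ∈ F | spanDim τ = r - 1} = ⋃ i, {x | f i x = 0}) (hf : ∀ i, f i ≠ 0)
    {σ : Set (Vr r)} {q : Vr r} (h : MinC F σ q) (x : Vr r) : x ∈ σ ↔ TS f q x := by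
  refine ⟨cone_sub hfan hS hf h, fun hx => ?_⟩
  obtain ⟨σ1, hσ1, hq1, hfull⟩ := full_sup hfan hc q
  have hx1 := full_sub hfan hc hS hf hσ1 hfull hq1 hx
  have hev : ∀ i, ∀ᶠ t : ℝ in nhdsWithin 0 (Set.Ioi 0),
      (f i q = 0 → f i (q + t • (-x)) = 0) ∧ 0 ≤ f i q * f i (q + t • (-x)) := by
    intro i
    by_cases h0 : f i q = 0
    · refine Filter.Eventually.of_forall fun t => ?_
      simp [h0, (hx i).1 h0]
    · have h1 : 0 < f i q * f i q := mul_self_pos.2 h0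
      have ho : IsOpen {z : Vr r | 0 < f i q * f i z} := isOpen_lt continuous_const
        (continuous_const.mul (f i).continuous_of_finiteDimensional)
      filter_upwards [(aux_small q (-x)).eventually (ho.mem_nhds h1)] with t ht
      exact ⟨fun h2 => absurd h2 h0, le_of_lt ht⟩
  obtain ⟨t, ht, ht0⟩ := ((Filter.eventually_all.2 hev).and self_mem_nhdsWithin).exists
  have ht0 : (0:ℝ) < t := ht0
  have hx2 : q + t • (-x) ∈ σ1 := full_sub hfan hc hS hf hσ1 hfull hq1 ht
  obtain ⟨-, ⟨m, hm, heq⟩⟩ := hfan.inter σ h.memF σ1 hσ1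
  have hmq : m q = 0 := by
    have : q ∈ σ ∩ σ1 := ⟨h.mem, hq1⟩
    rw [heq] at this
    exact this.2
  have h1 := hm _ hx1
  have h2 := hm _ hx2
  simp only [map_add, map_smul, map_neg, smul_eq_mul, hmq] at h2
  have h3 : m x = 0 := by nlinarith
  have : x ∈ σ ∩ σ1 := by rw [heq]; exact ⟨hx1, h3⟩
  exact this.1

lemma img_aux [Finite ι] (p a b : Vr r)
    (h0 : ∀ i, f i p = 0 → ∃ t : ℝ, 0 < t ∧ f i b = t * f i a)
    (h1 : ∀ i, f i p ≠ 0 → 0 < f i p * f i b) (x : Vr r) (hx : TS f a x) :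
    ∃ k : ℝ, TS f b (x + k • p) := by
  have hev : ∀ i, ∀ᶠ k : ℝ in Filter.atTop,
      (f i b = 0 → f i (x + k • p) = 0) ∧ 0 ≤ f i b * f i (x + k • p) := by
    intro i
    by_cases hp : f i p = 0
    · refine Filter.Eventually.of_forall fun k => ?_
      obtain ⟨t, ht, hb⟩ := h0 i hp
      simp only [map_add, map_smul, hp, smul_zero, add_zero, hb]
      refine ⟨fun h => (hx i).1 ?_, ?_⟩
      · rcases mul_eq_zero.1 h with h | h
        · exact absurd h ht.ne'
        · exact h
      · rw [mul_assoc]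
        exact mul_nonneg ht.le (hx i).2
    · have h2 := h1 i hp
      have hb : f i b ≠ 0 := by intro h; simp [h] at h2
      filter_upwards [Filter.eventually_ge_atTop (-(f i b * f i x) / (f i p * f i b))] with k hk
      refine ⟨fun h => absurd h hb, ?_⟩
      rw [div_le_iff₀ h2] at hk
      simp only [map_add, map_smul, smul_eq_mul]
      linarith
  exact (Filter.eventually_all.2 hev).exists

lemma fanStar_sub [Finite ι] (hfan : IsFan N F) (hc : FanComplete F)
    (hS : ⋃₀ {τ ∈ F | spanDim τ = r - 1} = ⋃ i, {x | f i x = 0}) (hf : ∀ i, f i ≠ 0)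
    (δ δ' : Set (Vr r)) (hδ : δ ∈ F) (hδ' : δ' ∈ F)
    (E : Submodule ℝ (Vr r)) (hE : Submodule.span ℝ δ = E)
    (hE' : Submodule.span ℝ δ' = E) : starAt F δ E ⊆ starAt F δ' E := by
  rintro _ ⟨σ, hσ, hδσ, rfl⟩
  obtain ⟨p, hp⟩ := minC_of_cone hfan hδ
  obtain ⟨p', hp'⟩ := minC_of_cone hfan hδ'
  obtain ⟨q, hq⟩ := minC_of_cone hfan hσ
  have hpE : p ∈ E := hE ▸ Submodule.subset_span hp.mem
  have hpE' : p' ∈ E := hE' ▸ Submodule.subset_span hp'.mem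
  have hz : ∀ i, f i p = 0 → f i p' = 0 := by
    intro i hi
    have : E ≤ LinearMap.ker (f i) := by
      rw [← hE, Submodule.span_le]
      exact fun z hz => cone_zero hfan hS hf hp hz i hi
    exact this hpE'
  have hz' : ∀ i, f i p' = 0 → f i p = 0 := by
    intro i hi
    have : E ≤ LinearMap.ker (f i) := by
      rw [← hE', Submodule.span_le]
      exact fun z hz => cone_zero hfan hS hf hp' hz i hi
    exact this hpE
  have hev : ∀ i, ∀ᶠ t : ℝ in nhdsWithin 0 (Set.Ioi 0),
      (f i p' ≠ 0 → 0 < f i p' * f i (p' + t • q)) := by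
    intro i
    by_cases h0 : f i p' = 0
    · exact Filter.Eventually.of_forall fun t h => absurd h0 h
    · have h1 : 0 < f i p' * f i p' := mul_self_pos.2 h0
      have ho : IsOpen {z : Vr r | 0 < f i p' * f i z} := isOpen_lt continuous_const
        (continuous_const.mul (f i).continuous_of_finiteDimensional)
      filter_upwards [(aux_small p' q).eventually (ho.mem_nhds h1)] with t ht _
      exact ht
  obtain ⟨t, ht, ht0⟩ := ((Filter.eventually_all.2 hev).and self_mem_nhdsWithin).exists
  have ht0 : (0:ℝ) < t := ht0
  obtain ⟨σ', hσ'⟩ := minC_of_pt hfan hc (p' + t • q)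
  have hmem := cone_eq hfan hc hS hf hq
  have hmem' := cone_eq hfan hc hS hf hσ'
  have hp'σ : p' ∈ σ' := by
    rw [hmem']
    intro i
    by_cases h0 : f i p' = 0
    · simp [h0]
    · have h2 := ht i h0
      refine ⟨fun h => ?_, by linarith⟩
      rw [h] at h2
      simp at h2
  refine ⟨σ', hσ'.memF, hp'.le σ' hσ'.memF hp'σ, ?_⟩
  have hpq : TS f q p := (hmem p).1 (hδσ hp.mem)
  apply Set.Subset.antisymm
  · rintro _ ⟨x, hx, rfl⟩
    obtain ⟨k, hk⟩ := img_aux (f := f) p' q (p' + t • q)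
      (fun i hi => ⟨t, ht0, by simp [hi]⟩) ht x ((hmem x).1 hx)
    refine ⟨x + k • p', (hmem' _).2 hk, ?_⟩
    rw [map_add, add_eq_left]
    simp [hpE']
  · rintro _ ⟨x, hx, rfl⟩
    obtain ⟨k, hk⟩ := img_aux (f := f) p (p' + t • q) q
      (fun i hi => ⟨t⁻¹, inv_pos.2 ht0, by
        simp only [map_add, map_smul, hz i hi, smul_eq_mul, zero_add]
        field_simp⟩) (fun i hi => by
        have h1 := hpq i
        refine lt_of_le_of_ne (by linarith [h1.2]) (Ne.symm (mul_ne_zero hi ?_))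
        exact fun h => hi (h1.1 h)) x ((hmem' x).1 hx)
    refine ⟨x + k • p, (hmem _).2 hk, ?_⟩
    rw [map_add, add_eq_left]
    simp [hpE]

end main

/-- in a strongly symmetric fan, the star fan of a cone depends only
on its span: if `span δ = span δ'` then `Star(δ) = Star(δ')`. -/
theorem stmt16 {r : ℕ} (N : AddSubgroup (Vr r)) (F : Set (Set (Vr r)))
    (hN : IsLattice N) (hfan : IsFan N F) (hss : SSymm F)
    (δ δ' : Set (Vr r)) (hδ : δ ∈ F) (hδ' : δ' ∈ F)
    (E : Submodule ℝ (Vr r)) (hE : Submodule.span ℝ δ = E)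
    (hE' : Submodule.span ℝ δ' = E) :
    starAt F δ E = starAt F δ' E := by
  obtain ⟨hc, Hs, hH, hU⟩ := hss
  choose f hf hfe using hH
  have hS : ⋃₀ {τ ∈ F | spanDim τ = r - 1} =
      ⋃ i : Hs, {x | f i.1 i.2 x = 0} := by
    rw [Module.finrank_fin_fun] at hU
    rw [hU]
    ext x
    simp only [Set.mem_sUnion, Set.mem_iUnion, Set.mem_ofPred_eq]
    constructor
    · rintro ⟨h, hh, hx⟩
      have hh' : h ∈ Hs := hh
      refine ⟨⟨h, hh'⟩, ?_⟩
      rw [hfe h hh'] at hx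
      exact hx
    · rintro ⟨⟨h, hh⟩, hx⟩
      refine ⟨h, hh, ?_⟩
      rw [hfe h hh]
      exact hx
  have hf' : ∀ i : Hs, f i.1 i.2 ≠ 0 := fun i => hf i.1 i.2
  exact Set.Subset.antisymm
    (fanStar_sub hfan hc hS hf' δ δ' hδ hδ' E hE hE')
    (fanStar_sub hfan hc hS hf' δ' δ hδ' hδ E hE' hE)
end

section
/- Let Σ be the fan of the Hirzebruch surface F_a, a ≥ 2, with primitive ray generators (1,0), (0,1), (−1,a), (0,−1) in ℤ^2. Then the fan Σ_C obtained by adding the rays through (−1,0) and (1,−a) is complete and centrally symmetric but not smooth; after additionally inserting the rays through (1,−ν) for 1 ≤ ν < a, the resulting fan is a smooth complete centrally symmetric fan with 2a rays. -/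
open scoped Classical Pointwise BigOperators

/-- The fan determined by a cyclic list of ray generators: the zero cone, the rays,
and the two-dimensional cones spanned by circularly adjacent rays. -/
def fanOfList (L : List (Vr 2)) : Set (Set (Vr 2)) :=
  {({0} : Set (Vr 2))} ∪
  { s | ∃ i : Fin L.length, s = coneGen ({L.get i} : Finset (Vr 2)) } ∪
  { s | ∃ i : Fin L.length,
      s = coneGen ({L.get i, L.get ⟨(i.1 + 1) % L.length, Nat.mod_lt _ i.pos⟩} :
        Finset (Vr 2)) }

/-- The standard lattice ℤ² ⊆ ℝ². -/
def stdLat : AddSubgroup (Vr 2) :=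
  AddSubgroup.closure (Set.range fun i : Fin 2 => (Pi.single i 1 : Vr 2))

/-- The rays of the centrally symmetric completion `Σ_C` of the Hirzebruch fan. -/
def hirzC (a : ℕ) : List (Vr 2) :=
  [![1, 0], ![0, 1], ![-1, (a : ℝ)], ![-1, 0], ![0, -1], ![1, -(a : ℝ)]]

/-- The rays of the desingularization: additionally the rays through `(1, −ν)` and
`(−1, ν)` for `1 ≤ ν < a`, in counterclockwise order. -/
def hirzFull (a : ℕ) : List (Vr 2) :=
  [![1, 0], ![0, 1]] ++
  ((List.range a).map fun k => ![-1, ((a - k : ℕ) : ℝ)]) ++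
  [![-1, 0], ![0, -1]] ++
  ((List.range a).map fun k => ![1, -(((a - k : ℕ) : ℝ))])

/-- planar determinant -/
def dt (u v : Vr 2) : ℝ := u 0 * v 1 - u 1 * v 0

/-- closed ray -/
def Ry (u : Vr 2) : Set (Vr 2) := {x | ∃ c : ℝ, 0 ≤ c ∧ x = c • u}

/-- closed planar cone -/
def Cn (u v : Vr 2) : Set (Vr 2) := {x | ∃ c d : ℝ, 0 ≤ c ∧ 0 ≤ d ∧ x = c • u + d • v}

lemma coneGen_sing (u : Vr 2) : coneGen ({u} : Finset (Vr 2)) = Ry u := by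
  ext x
  constructor
  · rintro ⟨c, hc, rfl⟩
    exact ⟨c u, hc u, by simp⟩
  · rintro ⟨c, hc, rfl⟩
    exact ⟨fun _ => c, fun _ => hc, by simp⟩

lemma coneGen_pair {u v : Vr 2} (h : u ≠ v) : coneGen ({u, v} : Finset (Vr 2)) = Cn u v := by
  ext x
  constructor
  · rintro ⟨c, hc, rfl⟩
    exact ⟨c u, c v, hc u, hc v, by rw [Finset.sum_pair h]⟩
  · rintro ⟨c, d, hc, hd, rfl⟩
    refine ⟨fun y => if y = u then c else d, fun y => ?_, ?_⟩
    · dsimp only; split_ifs <;> assumption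
    · rw [Finset.sum_pair h]; simp [h.symm]

lemma coneGen_emp : coneGen (∅ : Finset (Vr 2)) = {0} := by
  ext x
  constructor
  · rintro ⟨c, hc, rfl⟩
    simp
  · rintro rfl
    exact ⟨fun _ => 0, fun _ => le_rfl, by simp⟩

lemma ne_of_dt {u v : Vr 2} (h : 0 < dt u v) : u ≠ v := by
  rintro rfl
  unfold dt at h; linarith [mul_comm (u 0) (u 1)]

lemma ne_zero_of_dt {u v : Vr 2} (h : 0 < dt u v) : u ≠ 0 := by
  rintro rfl
  simp [dt] at h

lemma ne_zero_of_dt' {u v : Vr 2} (h : 0 < dt u v) : v ≠ 0 := by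
  rintro rfl
  simp [dt] at h

/-- the functional `dt · y` -/
def fnl (y : Vr 2) : Vr 2 →ₗ[ℝ] ℝ where
  toFun x := dt x y
  map_add' := by intro p q; simp [dt]; ring
  map_smul' := by intro p q; simp [dt]; ring

lemma fnl_apply (y x : Vr 2) : fnl y x = dt x y := rfl

lemma dt_skew (u v : Vr 2) : dt v u = - dt u v := by unfold dt; ring
lemma dt_self (u : Vr 2) : dt u u = 0 := by unfold dt; ring
lemma dt_add (u v w : Vr 2) : dt u (v + w) = dt u v + dt u w := by unfold dt; simp; ring
lemma dt_neg_left (u v : Vr 2) : dt (-u) v = - dt u v := by unfold dt; simp; ring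
lemma dt_neg_right (u v : Vr 2) : dt u (-v) = - dt u v := by unfold dt; simp; ring

lemma face_self (σ : Set (Vr 2)) : IsFaceOf σ σ := ⟨0, by simp, by simp⟩

lemma zero_mem_Ry (u : Vr 2) : (0 : Vr 2) ∈ Ry u := ⟨0, le_rfl, by simp⟩
lemma zero_mem_Cn (u v : Vr 2) : (0 : Vr 2) ∈ Cn u v := ⟨0, 0, le_rfl, le_rfl, by simp⟩
lemma Ry_sub_left (u v : Vr 2) : Ry u ⊆ Cn u v := by
  rintro x ⟨c, hc, rfl⟩; exact ⟨c, 0, hc, le_rfl, by simp⟩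
lemma Ry_sub_right (u v : Vr 2) : Ry v ⊆ Cn u v := by
  rintro x ⟨c, hc, rfl⟩; exact ⟨0, c, le_rfl, hc, by simp⟩

lemma face_pos_Cn {u v : Vr 2} (f : Vr 2 →ₗ[ℝ] ℝ) (hu : 0 < f u) (hv : 0 < f v) :
    Cn u v ∩ {x | f x = 0} = {0} := by
  ext x
  constructor
  · rintro ⟨⟨c, d, hc, hd, rfl⟩, h⟩
    simp only [Set.mem_ofPred_eq, map_add, map_smul, smul_eq_mul] at h
    have h1 := mul_nonneg hc hu.le
    have h2 := mul_nonneg hd hv.le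
    have h3 : c = 0 := by
      rcases mul_eq_zero.mp (show c * f u = 0 by linarith) with h | h
      · exact h
      · linarith
    have h4 : d = 0 := by
      rcases mul_eq_zero.mp (show d * f v = 0 by linarith) with h | h
      · exact h
      · linarith
    simp [h3, h4]
  · rintro rfl
    exact ⟨zero_mem_Cn _ _, by simp⟩

lemma face_left_Cn {u v : Vr 2} (f : Vr 2 →ₗ[ℝ] ℝ) (hu : f u = 0) (hv : 0 < f v) :
    Cn u v ∩ {x | f x = 0} = Ry u := by
  ext x
  constructor
  · rintro ⟨⟨c, d, hc, hd, rfl⟩, h⟩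
    simp only [Set.mem_ofPred_eq, map_add, map_smul, smul_eq_mul, hu] at h
    have h4 : d = 0 := by
      rcases mul_eq_zero.mp (show d * f v = 0 by linarith) with h | h
      · exact h
      · linarith
    exact ⟨c, hc, by simp [h4]⟩
  · rintro ⟨c, hc, rfl⟩
    exact ⟨Ry_sub_left _ _ ⟨c, hc, rfl⟩, by simp [hu]⟩

lemma Cn_comm (u v : Vr 2) : Cn u v = Cn v u := by
  ext x
  constructor
  · rintro ⟨c, d, hc, hd, rfl⟩; exact ⟨d, c, hd, hc, add_comm _ _⟩
  · rintro ⟨c, d, hc, hd, rfl⟩; exact ⟨d, c, hd, hc, add_comm _ _⟩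

lemma Cn_nonneg {u v : Vr 2} (f : Vr 2 →ₗ[ℝ] ℝ) (hu : 0 ≤ f u) (hv : 0 ≤ f v) :
    ∀ x ∈ Cn u v, 0 ≤ f x := by
  rintro x ⟨c, d, hc, hd, rfl⟩
  simp only [map_add, map_smul, smul_eq_mul]
  positivity

lemma faces_Cn {u v : Vr 2} {τ : Set (Vr 2)} (h : IsFaceOf τ (Cn u v)) :
    τ = {0} ∨ τ = Ry u ∨ τ = Ry v ∨ τ = Cn u v := by
  obtain ⟨f, hf, rfl⟩ := h
  have hu : 0 ≤ f u := hf u (Ry_sub_left _ _ ⟨1, by norm_num, by simp⟩)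
  have hv : 0 ≤ f v := hf v (Ry_sub_right _ _ ⟨1, by norm_num, by simp⟩)
  rcases hu.eq_or_lt with hu | hu <;> rcases hv.eq_or_lt with hv | hv
  · right; right; right
    rw [Set.inter_eq_left]
    rintro x ⟨c, d, hc, hd, rfl⟩
    simp [← hu, ← hv]
  · right; left; exact face_left_Cn f hu.symm hv
  · right; right; left; rw [Cn_comm]; exact face_left_Cn f hv.symm hu
  · left; exact face_pos_Cn f hu hv

lemma faces_Ry {u : Vr 2} {τ : Set (Vr 2)} (h : IsFaceOf τ (Ry u)) :
    τ = {0} ∨ τ = Ry u := by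
  have e : Ry u = Cn u u := by
    ext x
    constructor
    · intro h; exact Ry_sub_left _ _ h
    · rintro ⟨c, d, hc, hd, rfl⟩; exact ⟨c + d, by positivity, by rw [add_smul]⟩
  rw [e] at h ⊢
  have := faces_Cn h
  rw [e] at this
  tauto

lemma faces_zero {τ : Set (Vr 2)} (h : IsFaceOf τ ({0} : Set (Vr 2))) : τ = {0} := by
  obtain ⟨f, hf, rfl⟩ := h
  ext x; simp

lemma zero_face_Cn {u v : Vr 2} (h : 0 < dt u v) : IsFaceOf {0} (Cn u v) := by
  have h1 : 0 < fnl (v - u) u := by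
    have : fnl (v - u) u = dt u v := by simp [fnl_apply, dt]; ring
    linarith
  have h2 : 0 < fnl (v - u) v := by
    have : fnl (v - u) v = dt u v := by simp [fnl_apply, dt]; ring
    linarith
  exact ⟨fnl (v - u), Cn_nonneg _ h1.le h2.le, (face_pos_Cn _ h1 h2).symm⟩

lemma left_face_Cn {u v : Vr 2} (h : 0 < dt u v) : IsFaceOf (Ry u) (Cn u v) := by
  have h1 : fnl (-u) u = 0 := by simp [fnl_apply, dt]; ring
  have h2 : 0 < fnl (-u) v := by
    have : fnl (-u) v = dt u v := by simp [fnl_apply, dt]; ring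
    linarith
  exact ⟨fnl (-u), Cn_nonneg _ h1.ge h2.le, (face_left_Cn _ h1 h2).symm⟩

lemma right_face_Cn {u v : Vr 2} (h : 0 < dt u v) : IsFaceOf (Ry v) (Cn u v) := by
  have h1 : fnl v v = 0 := by simp [fnl_apply, dt]; ring
  have h2 : 0 < fnl v u := h
  rw [Cn_comm]
  exact ⟨fnl v, Cn_nonneg _ h1.ge h2.le, (face_left_Cn _ h1 h2).symm⟩

lemma zero_face_Ry {u v : Vr 2} (h : 0 < dt u v) : IsFaceOf {0} (Ry u) := by
  refine ⟨fnl v, ?_, ?_⟩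
  · rintro x ⟨c, hc, rfl⟩
    rw [map_smul, fnl_apply, smul_eq_mul]; positivity
  · ext x
    constructor
    · rintro rfl; exact ⟨zero_mem_Ry _, by simp⟩
    · rintro ⟨⟨c, hc, rfl⟩, hx⟩
      rw [Set.mem_ofPred_eq, map_smul, fnl_apply, smul_eq_mul] at hx
      rcases mul_eq_zero.mp hx with h' | h'
      · simp [h']
      · linarith

lemma Ry_inter (u v : Vr 2) : Ry u ∩ Ry v = {0} ∨ Ry u = Ry v := by
  by_cases h : Ry u ∩ Ry v ⊆ {0}
  · left
    refine Set.Subset.antisymm h ?_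
    rintro x rfl
    exact ⟨zero_mem_Ry _, zero_mem_Ry _⟩
  · right
    rw [Set.not_subset] at h
    obtain ⟨x, ⟨⟨c, hc, h1⟩, ⟨d, hd, h2⟩⟩, hx⟩ := h
    have hx : x ≠ 0 := hx
    have hc0 : 0 < c := by
      rcases hc.eq_or_lt with h | h
      · exfalso; apply hx; rw [h1, ← h]; simp
      · exact h
    have hd0 : 0 < d := by
      rcases hd.eq_or_lt with h | h
      · exfalso; apply hx; rw [h2, ← h]; simp
      · exact h
    have e1 : u = (d / c) • v := by
      rw [div_eq_inv_mul, mul_smul, ← h2, h1, smul_smul, inv_mul_cancel₀ hc0.ne', one_smul]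
    have e2 : v = (c / d) • u := by
      rw [div_eq_inv_mul, mul_smul, ← h1, h2, smul_smul, inv_mul_cancel₀ hd0.ne', one_smul]
    ext y
    constructor
    · rintro ⟨t, ht, rfl⟩
      exact ⟨t * (d / c), by positivity, by rw [mul_smul, ← e1]⟩
    · rintro ⟨t, ht, rfl⟩
      exact ⟨t * (c / d), by positivity, by rw [mul_smul, ← e2]⟩

/-- intersection via separating functional, disjoint case -/
lemma inter_zero {u v p q : Vr 2} (f : Vr 2 →ₗ[ℝ] ℝ) (hu : 0 < f u) (hv : 0 < f v)
    (hp : f p < 0) (hq : f q < 0) : Cn u v ∩ Cn p q = {0} := by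
  refine Set.Subset.antisymm ?_ ?_
  · rintro x ⟨h1, h2⟩
    have a1 := Cn_nonneg f hu.le hv.le x h1
    have a2 := Cn_nonneg (-f) (by simp; exact hp.le) (by simp; exact hq.le) x h2
    simp only [LinearMap.neg_apply] at a2
    rw [← face_pos_Cn f hu hv]
    exact ⟨h1, by simp only [Set.mem_ofPred_eq]; linarith⟩
  · rintro x rfl
    exact ⟨zero_mem_Cn _ _, zero_mem_Cn _ _⟩

lemma inter_ray {u v q : Vr 2} (hu : 0 < dt u v) (hq : 0 < dt v q) :
    Cn u v ∩ Cn v q = Ry v := by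
  refine Set.Subset.antisymm ?_ ?_
  · rintro x ⟨h1, h2⟩
    have a1 := Cn_nonneg (fnl v) hu.le (by rw [fnl_apply, dt_self]) x h1
    have a2 := Cn_nonneg (-fnl v) (by simp [fnl_apply, dt_self])
      (by simp only [LinearMap.neg_apply, fnl_apply, dt_skew v q]; linarith) x h2
    simp only [LinearMap.neg_apply] at a2
    rw [← face_left_Cn (u := v) (v := u) (fnl v) (by rw [fnl_apply, dt_self]) hu]
    rw [Cn_comm v u]
    exact ⟨h1, by simp only [Set.mem_ofPred_eq]; linarith⟩
  · rintro x hx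
    exact ⟨Ry_sub_right _ _ hx, Ry_sub_left _ _ hx⟩

/-- antiperiodic positively turning sequences -/
structure Anti (m : ℕ) (w : ℕ → Vr 2) : Prop where
  two : 2 ≤ m
  anti : ∀ i, w (i + m) = - w i
  pos : ∀ i j, i < j → j < i + m → 0 < dt (w i) (w j)

/-- the fan of a sequence -/
def FF (w : ℕ → Vr 2) : Set (Set (Vr 2)) :=
  {σ | σ = {0} ∨ (∃ i, σ = Ry (w i)) ∨ ∃ i, σ = Cn (w i) (w (i + 1))}

namespace Anti
variable {m : ℕ} {w : ℕ → Vr 2}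

lemma step (h : Anti m w) (i : ℕ) : 0 < dt (w i) (w (i + 1)) :=
  h.pos i (i + 1) (by omega) (by have := h.two; omega)

lemma per (h : Anti m w) (i : ℕ) : w (i + 2 * m) = w i := by
  rw [two_mul, ← add_assoc, h.anti, h.anti, neg_neg]

lemma per_mul (h : Anti m w) (i k : ℕ) : w (i + 2 * m * k) = w i := by
  induction k with
  | zero => simp
  | succ k ih => rw [Nat.mul_succ, ← add_assoc, h.per, ih]

lemma mod (h : Anti m w) (i : ℕ) : w (i % (2 * m)) = w i := by
  conv_rhs => rw [← Nat.mod_add_div i (2 * m)]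
  rw [h.per_mul]

lemma per_succ (h : Anti m w) (i : ℕ) : w (i + 2 * m + 1) = w (i + 1) := by
  rw [show i + 2 * m + 1 = i + 1 + 2 * m by ring, h.per]

lemma mod_succ (h : Anti m w) (i : ℕ) : w (i % (2 * m) + 1) = w (i + 1) := by
  conv_rhs => rw [← Nat.mod_add_div i (2 * m), add_right_comm]
  rw [h.per_mul]

lemma inter_aux (h : Anti m w) (i j : ℕ) (h1 : i < j) (h2 : j ≤ i + m) :
    Cn (w i) (w (i + 1)) ∩ Cn (w j) (w (j + 1)) = {0} ∨
    ∃ k, Cn (w i) (w (i + 1)) ∩ Cn (w j) (w (j + 1)) = Ry (w k) ∧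
      IsFaceOf (Ry (w k)) (Cn (w i) (w (i + 1))) ∧
      IsFaceOf (Ry (w k)) (Cn (w j) (w (j + 1))) := by
  have hm := h.two
  rcases Nat.lt_or_ge (i + 1) j with h3 | h3
  · left
    have p1 := h.step i
    have p2 := h.step j
    have p3 := h.pos (i + 1) j h3 (by omega)
    have p4 : 0 ≤ dt (w i) (w j) := by
      rcases h2.eq_or_lt with e | e
      · rw [e, h.anti, dt_neg_right, dt_self]; simp
      · exact (h.pos i j h1 e).le
    have p5 : 0 ≤ dt (w (i + 1)) (w (j + 1)) := by
      rcases h2.eq_or_lt with e | e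
      · rw [e, show i + m + 1 = i + 1 + m by ring, h.anti, dt_neg_right, dt_self]; simp
      · exact (h.pos _ _ (by omega) (by omega)).le
    apply inter_zero (fnl (w (i + 1) + w j)) <;> rw [fnl_apply, dt_add]
    · linarith
    · rw [dt_self]; linarith
    · rw [dt_self, dt_skew (w (i+1)) (w j)]; linarith
    · rw [dt_skew (w (i+1)) (w (j+1)), dt_skew (w j) (w (j+1))]; linarith
  · right
    obtain rfl : j = i + 1 := by omega
    exact ⟨i + 1, inter_ray (h.step i) (h.step _), right_face_Cn (h.step i),
      left_face_Cn (h.step _)⟩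

lemma inter (h : Anti m w) (i j : ℕ) :
    Cn (w i) (w (i + 1)) ∩ Cn (w j) (w (j + 1)) = {0} ∨
    (∃ k, Cn (w i) (w (i + 1)) ∩ Cn (w j) (w (j + 1)) = Ry (w k) ∧
      IsFaceOf (Ry (w k)) (Cn (w i) (w (i + 1))) ∧
      IsFaceOf (Ry (w k)) (Cn (w j) (w (j + 1)))) ∨
    Cn (w i) (w (i + 1)) = Cn (w j) (w (j + 1)) := by
  have hm := h.two
  wlog hi : i < 2 * m generalizing i
  · have := this (i % (2 * m)) (Nat.mod_lt _ (by omega))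
    rwa [h.mod, h.mod_succ] at this
  wlog hj : j < 2 * m generalizing j
  · have := this (j % (2 * m)) (Nat.mod_lt _ (by omega))
    rwa [h.mod, h.mod_succ] at this
  wlog hij : i ≤ j generalizing i j
  · have := this j hj i hi (by omega)
    rcases this with h | ⟨k, h1, h2, h3⟩ | h
    · left; rwa [Set.inter_comm]
    · right; left; exact ⟨k, by rwa [Set.inter_comm], h3, h2⟩
    · right; right; exact h.symm
  rcases hij.eq_or_lt with e | e
  · subst e; right; right; rfl
  rcases Nat.lt_or_ge (i + m) j with h1 | h1
  · have := h.inter_aux j (i + 2 * m) (by omega) (by omega)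
    rw [h.per, h.per_succ] at this
    rcases this with h | ⟨k, h1, h2, h3⟩
    · left; rwa [Set.inter_comm]
    · right; left; exact ⟨k, by rwa [Set.inter_comm], h3, h2⟩
  · exact (h.inter_aux i j e h1).elim Or.inl (fun q => Or.inr (Or.inl q))

lemma ray_cone (h : Anti m w) (i j : ℕ) :
    IsFaceOf (Ry (w i) ∩ Cn (w j) (w (j + 1))) (Ry (w i)) ∧
    IsFaceOf (Ry (w i) ∩ Cn (w j) (w (j + 1))) (Cn (w j) (w (j + 1))) := by
  have e : Ry (w i) ∩ Cn (w j) (w (j + 1)) =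
      Ry (w i) ∩ (Cn (w i) (w (i + 1)) ∩ Cn (w j) (w (j + 1))) := by
    rw [← Set.inter_assoc, Set.inter_eq_left.mpr (Ry_sub_left _ _)]
  have z : Ry (w i) ∩ {0} = {0} := by
    rw [Set.inter_eq_right]; rintro x rfl; exact zero_mem_Ry _
  rw [e]
  rcases h.inter i j with h1 | ⟨k, h1, h2, h3⟩ | h1
  · rw [h1, z]
    exact ⟨zero_face_Ry (h.step i), zero_face_Cn (h.step j)⟩
  · rw [h1]
    rcases Ry_inter (w i) (w k) with h4 | h4
    · rw [h4]
      exact ⟨zero_face_Ry (h.step i), zero_face_Cn (h.step j)⟩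
    · rw [h4, Set.inter_self]
      exact ⟨face_self _, h3⟩
  · rw [← h1, Set.inter_self, Set.inter_eq_left.mpr (Ry_sub_left _ _)]
    exact ⟨face_self _, left_face_Cn (h.step i)⟩

lemma isFan (h : Anti m w) (hl : ∀ i, w i ∈ stdLat) : IsFan stdLat (FF w) where
  finite := by
    have hm := h.two
    refine Set.Finite.subset (s := {({0} : Set (Vr 2))} ∪
      ((fun i => Ry (w i)) '' Set.Iio (2 * m) ∪
        (fun i => Cn (w i) (w (i + 1))) '' Set.Iio (2 * m))) ?_ ?_
    · exact (Set.finite_singleton _).union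
        (((Set.finite_Iio _).image _).union ((Set.finite_Iio _).image _))
    · rintro σ (rfl | ⟨i, rfl⟩ | ⟨i, rfl⟩)
      · left; rfl
      · right; left
        exact ⟨i % (2 * m), Nat.mod_lt _ (by omega), by simp only [h.mod]⟩
      · right; right
        exact ⟨i % (2 * m), Nat.mod_lt _ (by omega), by simp only [h.mod, h.mod_succ]⟩
  nonempty := ⟨{0}, Or.inl rfl⟩
  cones := by
    have sc : ∀ i, Cn (w i) (w (i + 1)) ∩ -Cn (w i) (w (i + 1)) ⊆ {0} := by
      rintro i x ⟨h1, h2⟩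
      obtain ⟨f, hf, hz⟩ := zero_face_Cn (h.step i)
      have a1 := hf _ h1
      have a2 := hf _ h2
      rw [map_neg] at a2
      rw [hz]
      exact ⟨h1, by simp only [Set.mem_ofPred_eq]; linarith⟩
    rintro σ (rfl | ⟨i, rfl⟩ | ⟨i, rfl⟩)
    · exact ⟨∅, by simp, coneGen_emp.symm, by simp⟩
    · refine ⟨{w i}, by simpa using hl i, (coneGen_sing _).symm, ?_⟩
      refine Set.Subset.trans ?_ (sc i)
      rintro x ⟨h1, h2⟩
      exact ⟨Ry_sub_left _ _ h1, Ry_sub_left _ _ h2⟩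
    · refine ⟨{w i, w (i + 1)}, ?_, (coneGen_pair (ne_of_dt (h.step i))).symm, sc i⟩
      intro x hx
      simp only [Finset.coe_insert, Finset.coe_singleton, Set.mem_insert_iff,
        Set.mem_singleton_iff] at hx
      rcases hx with rfl | rfl
      · exact hl _
      · exact hl _
  faces := by
    rintro σ (rfl | ⟨i, rfl⟩ | ⟨i, rfl⟩) τ hτ
    · left; exact faces_zero hτ
    · rcases faces_Ry hτ with rfl | rfl
      · left; rfl
      · right; left; exact ⟨i, rfl⟩
    · rcases faces_Cn hτ with rfl | rfl | rfl | rfl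
      · left; rfl
      · right; left; exact ⟨i, rfl⟩
      · right; left; exact ⟨i + 1, rfl⟩
      · right; right; exact ⟨i, rfl⟩
  inter := by
    have z0 : ∀ σ ∈ FF w, ({0} : Set (Vr 2)) ∩ σ = {0} ∧ IsFaceOf {0} σ := by
      rintro σ (rfl | ⟨i, rfl⟩ | ⟨i, rfl⟩)
      · exact ⟨Set.inter_self _, face_self _⟩
      · refine ⟨?_, zero_face_Ry (h.step i)⟩
        rw [Set.inter_eq_left]; rintro x rfl; exact zero_mem_Ry _
      · refine ⟨?_, zero_face_Cn (h.step i)⟩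
        rw [Set.inter_eq_left]; rintro x rfl; exact zero_mem_Cn _ _
    intro σ h1 τ h2
    have h1' := h1
    have h2' := h2
    rcases h1 with rfl | ⟨i, rfl⟩ | ⟨i, rfl⟩
    · rw [(z0 _ h2').1]
      exact ⟨face_self _, (z0 _ h2').2⟩
    · rcases h2 with rfl | ⟨j, rfl⟩ | ⟨j, rfl⟩
      · rw [Set.inter_comm, (z0 _ h1').1]
        exact ⟨(z0 _ h1').2, face_self _⟩
      · rcases Ry_inter (w i) (w j) with e | e
        · rw [e]; exact ⟨(z0 _ h1').2, (z0 _ h2').2⟩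
        · rw [e, Set.inter_self]; exact ⟨face_self _, face_self _⟩
      · exact h.ray_cone i j
    · rcases h2 with rfl | ⟨j, rfl⟩ | ⟨j, rfl⟩
      · rw [Set.inter_comm, (z0 _ h1').1]
        exact ⟨(z0 _ h1').2, face_self _⟩
      · rw [Set.inter_comm]; exact (h.ray_cone j i).symm
      · rcases h.inter i j with e | ⟨k, e, e1, e2⟩ | e
        · rw [e]; exact ⟨(z0 _ h1').2, (z0 _ h2').2⟩
        · rw [e]; exact ⟨e1, e2⟩
        · rw [e, Set.inter_self]; exact ⟨face_self _, face_self _⟩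

lemma mem_Cn {u v x : Vr 2} (h : 0 < dt u v) (h1 : 0 ≤ dt u x) (h2 : dt v x ≤ 0) :
    x ∈ Cn u v := by
  refine ⟨- dt v x / dt u v, dt u x / dt u v, div_nonneg (by linarith) h.le,
    div_nonneg h1 h.le, ?_⟩
  have := h.ne'
  ext i
  simp only [Pi.add_apply, Pi.smul_apply, smul_eq_mul]
  field_simp
  fin_cases i <;> simp [dt] <;> ring

lemma complete (h : Anti m w) : FanComplete (FF w) := by
  have hm := h.two
  unfold FanComplete
  rw [Set.eq_univ_iff_forall]
  intro x
  obtain ⟨i, hi⟩ : ∃ i, 0 ≤ dt (w i) x := by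
    rcases le_total 0 (dt (w 0) x) with h0 | h0
    · exact ⟨0, h0⟩
    · refine ⟨0 + m, ?_⟩
      rw [h.anti, dt_neg_left]; linarith
  have key : ∃ j, 0 ≤ dt (w j) x ∧ dt (w (j + 1)) x ≤ 0 := by
    by_contra hc
    push Not at hc
    have : ∀ k, 0 ≤ dt (w (i + k)) x := by
      intro k
      induction k with
      | zero => exact hi
      | succ k ih => exact (hc _ ih).le
    have h1 := hc _ (this (m - 1))
    rw [show i + (m - 1) + 1 = i + m by omega, h.anti, dt_neg_left] at h1
    linarith
  obtain ⟨j, h1, h2⟩ := key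
  exact ⟨_, Or.inr (Or.inr ⟨j, rfl⟩), mem_Cn (h.step j) h1 h2⟩

lemma csymm (h : Anti m w) : CSymm (FF w) := by
  rintro σ (rfl | ⟨i, rfl⟩ | ⟨i, rfl⟩)
  · left; simp
  · right; left
    refine ⟨i + m, ?_⟩
    rw [h.anti]
    ext x
    constructor
    · rintro ⟨c, hc, e⟩; exact ⟨c, hc, by rw [smul_neg, ← e, neg_neg]⟩
    · rintro ⟨c, hc, e⟩; exact ⟨c, hc, by rw [e, smul_neg, neg_neg]⟩
  · right; right
    refine ⟨i + m, ?_⟩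
    rw [show i + m + 1 = i + 1 + m by ring, h.anti, h.anti]
    ext x
    constructor
    · rintro ⟨c, d, hc, hd, e⟩
      refine ⟨c, d, hc, hd, ?_⟩
      rw [smul_neg, smul_neg, ← neg_add, ← e, neg_neg]
    · rintro ⟨c, d, hc, hd, e⟩
      refine ⟨c, d, hc, hd, ?_⟩
      rw [e, smul_neg, smul_neg, ← neg_add, neg_neg]

lemma fan_eq (h : Anti m w) (L : List (Vr 2)) (hL : L.length = 2 * m)
    (hg : ∀ i (hi : i < L.length), L.get ⟨i, hi⟩ = w i) : fanOfList L = FF w := by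
  have hm := h.two
  have e2 : ∀ i : Fin L.length,
      coneGen ({L.get i, L.get ⟨(i.1 + 1) % L.length, Nat.mod_lt _ i.pos⟩} :
        Finset (Vr 2)) = Cn (w i) (w (i + 1)) := by
    intro i
    have a1 : L.get i = w i := hg i.1 i.2
    have a2 : L.get ⟨(i.1 + 1) % L.length, Nat.mod_lt _ i.pos⟩ = w (i + 1) := by
      rw [hg, ← h.mod (i + 1)]
      congr 2
    rw [a1, a2, coneGen_pair (ne_of_dt (h.step i))]
  have e1 : ∀ i : Fin L.length, coneGen ({L.get i} : Finset (Vr 2)) = Ry (w i) := by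
    intro i
    have a1 : L.get i = w i := hg i.1 i.2
    rw [a1, coneGen_sing]
  unfold fanOfList
  simp only [e1, e2]
  ext σ
  constructor
  · rintro ((h1 | ⟨i, h1⟩) | ⟨i, h1⟩)
    · exact Or.inl h1
    · exact Or.inr (Or.inl ⟨i, h1⟩)
    · exact Or.inr (Or.inr ⟨i, h1⟩)
  · rintro (h1 | ⟨i, h1⟩ | ⟨i, h1⟩)
    · exact Or.inl (Or.inl h1)
    · refine Or.inl (Or.inr ⟨⟨i % (2 * m), ?_⟩, ?_⟩)
      · rw [hL]; exact Nat.mod_lt _ (by omega)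
      · simpa only [h.mod] using h1
    · refine Or.inr ⟨⟨i % (2 * m), ?_⟩, ?_⟩
      · rw [hL]; exact Nat.mod_lt _ (by omega)
      · simpa only [h.mod, h.mod_succ] using h1

end Anti

lemma li_of_dt {u v : Vr 2} (h : 0 < dt u v) : LinearIndependent ℝ ![u, v] := by
  rw [LinearIndependent.pair_iff]
  intro s t hst
  have h0 := congrFun hst 0
  have h1 := congrFun hst 1
  simp only [Pi.add_apply, Pi.smul_apply, smul_eq_mul, Pi.zero_apply] at h0 h1
  unfold dt at h
  constructor
  · have : s * (u 0 * v 1 - u 1 * v 0) = 0 := by linear_combination v 1 * h0 - v 0 * h1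
    rcases mul_eq_zero.mp this with h | h
    · exact h
    · linarith
  · have : t * (u 0 * v 1 - u 1 * v 0) = 0 := by linear_combination u 0 * h1 - u 1 * h0
    rcases mul_eq_zero.mp this with h | h
    · exact h
    · linarith

lemma spanDim_zero : spanDim ({0} : Set (Vr 2)) = 0 := by
  unfold spanDim
  rw [Submodule.span_zero_singleton]; simp

lemma spanDim_Ry {u : Vr 2} (h : u ≠ 0) : spanDim (Ry u) = 1 := by
  unfold spanDim
  have : Submodule.span ℝ (Ry u) = Submodule.span ℝ {u} := by
    apply le_antisymm
    · rw [Submodule.span_le]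
      rintro x ⟨c, hc, rfl⟩
      exact Submodule.smul_mem _ _ (Submodule.mem_span_singleton_self u)
    · apply Submodule.span_mono
      rintro x rfl
      exact ⟨1, by norm_num, by simp⟩
  rw [this, finrank_span_singleton h]

lemma spanDim_Cn {u v : Vr 2} (h : 0 < dt u v) : spanDim (Cn u v) ≠ 1 := by
  unfold spanDim
  have hle : Submodule.span ℝ (Set.range ![u, v]) ≤ Submodule.span ℝ (Cn u v) := by
    apply Submodule.span_mono
    rintro x ⟨i, rfl⟩
    fin_cases i
    · exact Ry_sub_left _ _ ⟨1, by norm_num, by simp⟩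
    · exact Ry_sub_right _ _ ⟨1, by norm_num, by simp⟩
  have h1 := finrank_span_eq_card (li_of_dt h)
  have h2 := Submodule.finrank_mono hle
  rw [h1] at h2
  simp at h2
  omega

lemma Anti.ncard {m : ℕ} {w : ℕ → Vr 2} (h : Anti m w) :
    {s ∈ FF w | spanDim s = 1}.ncard = 2 * m := by
  have hm := h.two
  have e : {s ∈ FF w | spanDim s = 1} = (fun i => Ry (w i)) '' (Finset.range (2 * m) : Set ℕ) := by
    ext σ
    constructor
    · rintro ⟨rfl | ⟨i, rfl⟩ | ⟨i, rfl⟩, h1⟩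
      · rw [spanDim_zero] at h1; omega
      · exact ⟨i % (2 * m), by simpa using Nat.mod_lt _ (by omega), by simp only [h.mod]⟩
      · exact absurd h1 (spanDim_Cn (h.step i))
    · rintro ⟨i, hi, rfl⟩
      exact ⟨Or.inr (Or.inl ⟨i, rfl⟩), spanDim_Ry (ne_zero_of_dt (h.step i))⟩
  have noeq : ∀ i j, i < j → j < i + 2 * m → Ry (w i) ≠ Ry (w j) := by
    intro i j h1 h2 he
    have : w j ∈ Ry (w i) := by rw [he]; exact ⟨1, by norm_num, by simp⟩
    obtain ⟨c, hc, hj⟩ := this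
    have hz : ∀ y, dt (w j) y = c * dt (w i) y := by
      intro y; rw [hj]; unfold dt; simp; ring
    rcases lt_trichotomy j (i + m) with h3 | h3 | h3
    · have p := h.pos i j h1 h3
      have := hz (w j)
      rw [dt_self] at this
      have h4 := hz (w i)
      rw [dt_self, dt_skew (w i)] at h4
      linarith
    · have p := h.step i
      have h4 := hz (w (i + 1))
      rw [h3, h.anti, dt_neg_left] at h4
      have := mul_nonneg hc p.le
      linarith
    · have p := h.pos j (i + 2 * m) (by omega) (by omega)
      rw [h.per] at p
      have h4 := hz (w i)
      rw [dt_self] at h4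
      linarith
  rw [e, Set.ncard_image_of_injOn, Set.ncard_coe_finset, Finset.card_range]
  intro i hi j hj hij
  simp only [Finset.coe_range, Set.mem_Iio] at hi hj
  by_contra hne
  rcases Nat.lt_or_gt_of_ne hne with h1 | h1
  · exact noeq i j h1 (by omega) hij
  · exact noeq j i h1 (by omega) hij.symm

lemma mem_stdLat (x : Vr 2) : x ∈ stdLat ↔ ∃ p q : ℤ, x = ![(p : ℝ), (q : ℝ)] := by
  constructor
  · intro hx
    unfold stdLat at hx
    induction hx using AddSubgroup.closure_induction with
    | mem x hx =>
      obtain ⟨i, rfl⟩ := hx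
      fin_cases i
      · exact ⟨1, 0, by ext j; fin_cases j <;> simp⟩
      · exact ⟨0, 1, by ext j; fin_cases j <;> simp⟩
    | zero => exact ⟨0, 0, by ext j; fin_cases j <;> simp⟩
    | add x y _ _ hx hy =>
      obtain ⟨p, q, rfl⟩ := hx
      obtain ⟨r, s, rfl⟩ := hy
      exact ⟨p + r, q + s, by ext j; fin_cases j <;> simp⟩
    | neg x _ hx =>
      obtain ⟨p, q, rfl⟩ := hx
      exact ⟨-p, -q, by ext j; fin_cases j <;> simp⟩
  · rintro ⟨p, q, rfl⟩
    have : (![(p : ℝ), (q : ℝ)] : Vr 2) = p • (Pi.single 0 1 : Vr 2) + q • (Pi.single 1 1 : Vr 2) := by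
      ext j; fin_cases j <;> simp
    rw [this]
    refine AddSubgroup.add_mem _ (zsmul_mem (AddSubgroup.subset_closure (Set.mem_range.2 ⟨0, rfl⟩)) _)
      (zsmul_mem (AddSubgroup.subset_closure (Set.mem_range.2 ⟨1, rfl⟩)) _)

lemma zbasis {u v : Vr 2} (hu : u ∈ stdLat) (hv : v ∈ stdLat) (h : dt u v = 1) :
    IsZBasis stdLat ![u, v] := by
  refine ⟨li_of_dt (by rw [h]; norm_num), ?_⟩
  apply le_antisymm
  · rw [AddSubgroup.closure_le]
    rintro x ⟨i, rfl⟩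
    fin_cases i
    · exact hu
    · exact hv
  · intro x hx
    obtain ⟨p, q, rfl⟩ := (mem_stdLat u).1 hu
    obtain ⟨r, s, rfl⟩ := (mem_stdLat v).1 hv
    obtain ⟨y, z, rfl⟩ := (mem_stdLat x).1 hx
    simp [dt] at h
    have : (![(y : ℝ), (z : ℝ)] : Vr 2) =
        (y * s - z * r) • (![(p : ℝ), (q : ℝ)] : Vr 2) + (p * z - q * y) • (![(r : ℝ), (s : ℝ)] : Vr 2) := by
      ext j; fin_cases j <;> simp
      · linear_combination -(y : ℝ) * h
      · linear_combination -(z : ℝ) * h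
    rw [this]
    refine AddSubgroup.add_mem _ (zsmul_mem (AddSubgroup.subset_closure (Set.mem_range.2 ⟨0, rfl⟩)) _)
      (zsmul_mem (AddSubgroup.subset_closure (Set.mem_range.2 ⟨1, rfl⟩)) _)

lemma Anti.smooth {m : ℕ} {w : ℕ → Vr 2} (h : Anti m w) (hl : ∀ i, w i ∈ stdLat)
    (h1 : ∀ i, dt (w i) (w (i + 1)) = 1) : ∀ σ ∈ FF w, SmoothCone stdLat σ := by
  rintro σ (rfl | ⟨i, rfl⟩ | ⟨i, rfl⟩)
  · exact ⟨2, _, ∅, zbasis (hl 0) (hl 1) (h1 0), by rw [Finset.image_empty, coneGen_emp]⟩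
  · exact ⟨2, _, {0}, zbasis (hl i) (hl (i + 1)) (h1 i),
      by rw [Finset.image_singleton, coneGen_sing]; rfl⟩
  · refine ⟨2, _, {0, 1}, zbasis (hl i) (hl (i + 1)) (h1 i), ?_⟩
    rw [Finset.image_insert, Finset.image_singleton]
    exact (coneGen_pair (ne_of_dt (h.step i))).symm

/-- antiperiodic extension -/
def ext (m : ℕ) (h : ℕ → Vr 2) (i : ℕ) : Vr 2 := ((-1 : ℝ) ^ (i / m)) • h (i % m)

lemma ext_anti {m : ℕ} {h : ℕ → Vr 2} (hm : 0 < m) (i : ℕ) : ext m h (i + m) = - ext m h i := by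
  unfold ext
  rw [Nat.add_div_right _ hm, Nat.add_mod_right, pow_succ]
  simp

lemma ext_lt {m : ℕ} {h : ℕ → Vr 2} {i : ℕ} (hi : i < m) : ext m h i = h i := by
  unfold ext
  rw [Nat.div_eq_of_lt hi, Nat.mod_eq_of_lt hi]; simp

lemma ext_Anti {m : ℕ} {h : ℕ → Vr 2} (hm : 2 ≤ m)
    (hp : ∀ i j, i < j → j < m → 0 < dt (h i) (h j)) : Anti m (ext m h) where
  two := hm
  anti := ext_anti (by omega)
  pos := by
    intro i
    induction i using Nat.strong_induction_on with
    | _ i ih =>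
      intro j h1 h2
      rcases Nat.lt_or_ge i m with h3 | h3
      · rcases Nat.lt_or_ge j m with h4 | h4
        · rw [ext_lt h3, ext_lt h4]; exact hp i j h1 h4
        · obtain ⟨k, rfl⟩ := Nat.exists_eq_add_of_le' h4
          rw [ext_anti (by omega), dt_neg_right, ← dt_skew, ext_lt h3, ext_lt (by omega)]
          exact hp k i (by omega) h3
      · obtain ⟨k, rfl⟩ := Nat.exists_eq_add_of_le' h3
        obtain ⟨l, rfl⟩ := Nat.exists_eq_add_of_le' (show m ≤ j by omega)
        rw [ext_anti (by omega), ext_anti (by omega), dt_neg_right, dt_neg_left, neg_neg]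
        exact ih k (by omega) l (by omega) (by omega)

lemma ext_lat {m : ℕ} {h : ℕ → Vr 2} (hm : 0 < m) (hl : ∀ i, i < m → h i ∈ stdLat) (i : ℕ) :
    ext m h i ∈ stdLat := by
  unfold ext
  have := hl (i % m) (Nat.mod_lt _ hm)
  rcases neg_one_pow_eq_or ℝ (i / m) with e | e <;> rw [e]
  · simpa using this
  · simpa using this

lemma ext_step {m : ℕ} {h : ℕ → Vr 2} (hm : 0 < m) (h0 : h m = - h 0)
    (hs : ∀ i, i < m → dt (h i) (h (i + 1)) = 1) (i : ℕ) :
    dt (ext m h i) (ext m h (i + 1)) = 1 := by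
  induction i using Nat.strong_induction_on with
  | _ i ih =>
    rcases Nat.lt_or_ge i m with h3 | h3
    · rw [ext_lt h3]
      rcases Nat.lt_or_ge (i + 1) m with h4 | h4
      · rw [ext_lt h4]; exact hs i h3
      · have e : i + 1 = 0 + m := by omega
        have := hs i h3
        rw [e, ext_anti hm, ext_lt hm, ← h0]
        rw [e, zero_add] at this; exact this
    · obtain ⟨k, rfl⟩ := Nat.exists_eq_add_of_le' h3
      rw [add_right_comm, ext_anti hm, ext_anti hm, dt_neg_right, dt_neg_left, neg_neg]
      exact ih k (by omega)

lemma ext_list {m : ℕ} {h : ℕ → Vr 2} (hm : 2 ≤ m)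
    (hp : ∀ i j, i < j → j < m → 0 < dt (h i) (h j)) (L : List (Vr 2))
    (hL : L = (List.range m).map h ++ (List.range m).map (fun i => - h i)) :
    fanOfList L = FF (ext m h) := by
  subst hL
  apply (ext_Anti hm hp).fan_eq
  · simp; ring
  · intro i hi
    simp at hi
    rw [List.get_eq_getElem, List.getElem_append]
    split_ifs with h1
    · simp at h1
      simp [ext_lt h1]
    · simp at h1
      obtain ⟨k, rfl⟩ := Nat.exists_eq_add_of_le' h1
      rw [ext_anti (by omega), ext_lt (by omega)]
      simp

/-- half of the full list -/
def hF (a : ℕ) : ℕ → Vr 2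
  | 0 => ![1, 0]
  | 1 => ![0, 1]
  | (k + 2) => ![-1, ((a - k : ℕ) : ℝ)]

/-- half of the coarse list -/
def hC (a : ℕ) : ℕ → Vr 2
  | 0 => ![1, 0]
  | 1 => ![0, 1]
  | _ => ![-1, (a : ℝ)]

lemma hF_list (a : ℕ) : hirzFull a =
    (List.range (a + 2)).map (hF a) ++ (List.range (a + 2)).map (fun i => - hF a i) := by
  simp [hirzFull, List.range_succ_eq_map, hF, Function.comp_def]

lemma hC_list (a : ℕ) : hirzC a =
    (List.range 3).map (hC a) ++ (List.range 3).map (fun i => - hC a i) := by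
  simp [hirzC, List.range_succ_eq_map, hC]

lemma hF_pos (a : ℕ) : ∀ i j, i < j → j < a + 2 → 0 < dt (hF a i) (hF a j) := by
  intro i j h1 h2
  match i, j with
  | _, 0 => omega
  | 0, 1 => simp [hF, dt]
  | 0, k + 2 => simp [hF, dt]; omega
  | 1, 1 => omega
  | 1, k + 2 => simp [hF, dt]
  | i + 2, 1 => omega
  | i + 2, k + 2 =>
    have : a - k < a - i := by omega
    have : ((a - k : ℕ) : ℝ) < ((a - i : ℕ) : ℝ) := by exact_mod_cast this
    simp only [hF, dt, Matrix.cons_val_zero, Matrix.cons_val_one]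
    linarith

lemma hC_pos (a : ℕ) (ha : 2 ≤ a) : ∀ i j, i < j → j < 3 → 0 < dt (hC a i) (hC a j) := by
  intro i j h1 h2
  have : (0 : ℝ) < a := by exact_mod_cast (by omega : 0 < a)
  interval_cases j <;> interval_cases i <;> simp [hC, dt, this] <;> omega

lemma hF_lat (a i : ℕ) : hF a i ∈ stdLat := by
  rw [mem_stdLat]
  match i with
  | 0 => exact ⟨1, 0, by simp [hF]⟩
  | 1 => exact ⟨0, 1, by simp [hF]⟩
  | k + 2 => exact ⟨-1, (a - k : ℕ), by simp [hF]⟩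

lemma hC_lat (a i : ℕ) : hC a i ∈ stdLat := by
  rw [mem_stdLat]
  match i with
  | 0 => exact ⟨1, 0, by simp [hC]⟩
  | 1 => exact ⟨0, 1, by simp [hC]⟩
  | k + 2 => exact ⟨-1, a, by simp [hC]⟩

lemma hF_step (a i : ℕ) (hi : i < a + 2) : dt (hF a i) (hF a (i + 1)) = 1 := by
  match i with
  | 0 => simp [hF, dt]
  | 1 => simp [hF, dt]
  | k + 2 =>
    have : a - k = a - (k + 1) + 1 := by omega
    have : ((a - k : ℕ) : ℝ) = ((a - (k + 1) : ℕ) : ℝ) + 1 := by exact_mod_cast this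
    show dt (hF a (k + 2)) (hF a ((k + 1) + 2)) = 1
    simp only [hF, dt, Matrix.cons_val_zero, Matrix.cons_val_one]
    linarith

/-- A lattice point with first coordinate `-1` of a smooth cone in the region
`x < 0` is one of the generators. -/
lemma gen_mem {d : ℕ} {b : Fin d → Vr 2} {s : Finset (Fin d)} (hb : IsZBasis stdLat b)
    (hneg : ∀ i ∈ s, (b i) 0 ≤ -1) (q : ℤ)
    (hx : (![-1, (q : ℝ)] : Vr 2) ∈ coneGen (s.image b)) : ∃ i, b i = ![-1, (q : ℝ)] := by
  obtain ⟨c, hc, hx⟩ := hx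
  obtain ⟨hli, hcl⟩ := hb
  rw [Finset.sum_image (fun i _ j _ h => hli.injective h)] at hx
  have hmem : (![-1, (q : ℝ)] : Vr 2) ∈ AddSubgroup.closure (Set.range b) := by
    rw [hcl, mem_stdLat]; exact ⟨-1, q, by simp⟩
  have hz : ∀ y ∈ AddSubgroup.closure (Set.range b), ∃ n : Fin d → ℤ, y = ∑ i, (n i : ℝ) • b i := by
    intro y hy
    induction hy using AddSubgroup.closure_induction with
    | mem x hx =>
      obtain ⟨i, rfl⟩ := hx
      exact ⟨Pi.single i 1, by simp [Pi.single_apply, ite_smul]⟩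
    | zero => exact ⟨0, by simp⟩
    | add x y _ _ hx hy =>
      obtain ⟨p, rfl⟩ := hx
      obtain ⟨r, rfl⟩ := hy
      exact ⟨p + r, by simp [add_smul, Finset.sum_add_distrib]⟩
    | neg x _ hx =>
      obtain ⟨p, rfl⟩ := hx
      exact ⟨-p, by simp⟩
  obtain ⟨n, hn⟩ := hz _ hmem
  have hx' : (![-1, (q : ℝ)] : Vr 2) = ∑ i, (if i ∈ s then c (b i) else 0) • b i := by
    rw [hx]; simp [ite_smul, Finset.sum_ite_mem]
  have hcoef : ∀ i, (n i : ℝ) = if i ∈ s then c (b i) else 0 := by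
    have := Fintype.linearIndependent_iff.mp hli
      (fun i => (n i : ℝ) - if i ∈ s then c (b i) else 0)
      (by simp only [sub_smul, Finset.sum_sub_distrib]; rw [← hn, ← hx', sub_self])
    intro i; linarith [this i]
  have hn0 : ∀ i, 0 ≤ n i := by
    intro i
    have : (0 : ℝ) ≤ n i := by
      rw [hcoef]; split_ifs
      · exact hc _
      · exact le_rfl
    exact_mod_cast this
  have hns : ∀ i, i ∉ s → n i = 0 := by
    intro i hi
    have := hcoef i
    rw [if_neg hi] at this
    exact_mod_cast this
  -- sum of the coefficients is at most one
  have h0 := congrFun hn 0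
  simp only [Matrix.cons_val_zero, Finset.sum_apply, Pi.smul_apply, smul_eq_mul] at h0
  have hle : ∑ i, (n i : ℝ) ≤ 1 := by
    have : ∑ i, (n i : ℝ) ≤ ∑ i, -((n i : ℝ) * b i 0) := by
      apply Finset.sum_le_sum
      intro i _
      by_cases hi : i ∈ s
      · have h1 := hneg i hi
        have h2 : (0 : ℝ) ≤ n i := by exact_mod_cast hn0 i
        nlinarith
      · simp [hns i hi]
    rw [Finset.sum_neg_distrib, ← h0] at this
    linarith
  have hle' : ∑ i, n i ≤ 1 := by exact_mod_cast hle
  obtain ⟨i, hi⟩ : ∃ i, n i ≠ 0 := by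
    by_contra hcon
    push Not at hcon
    simp [hcon] at h0
  refine ⟨i, ?_⟩
  have hi1 : 1 ≤ n i := by have := hn0 i; omega
  have hrest : ∀ j, j ≠ i → n j = 0 := by
    intro j hj
    have h1 : n i + n j ≤ ∑ k, n k := by
      rw [← Finset.sum_pair hj.symm]
      exact Finset.sum_le_sum_of_subset_of_nonneg (Finset.subset_univ _) (fun k _ _ => hn0 k)
    have := hn0 j
    omega
  have hi2 : n i = 1 := by
    have : n i ≤ ∑ k, n k := Finset.single_le_sum (fun k _ => hn0 k) (Finset.mem_univ i)
    omega
  rw [hn, Finset.sum_eq_single i]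
  · simp [hi2]
  · intro j _ hj; simp [hrest j hj]
  · simp

lemma not_smooth (a : ℕ) (ha : 2 ≤ a) : ¬ SmoothCone stdLat (Cn ![-1, (a : ℝ)] ![-1, 0]) := by
  rintro ⟨d, b, s, hb, he⟩
  have ha' : (2 : ℝ) ≤ a := by exact_mod_cast ha
  have hneg : ∀ i ∈ s, (b i) 0 ≤ -1 := by
    intro i hi
    have h1 : b i ∈ Cn ![-1, (a : ℝ)] ![-1, 0] := by
      rw [he]
      refine ⟨fun v => if v = b i then 1 else 0, fun v => ?_, ?_⟩
      · dsimp only; split_ifs <;> norm_num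
      · simp [ite_smul, Finset.mem_image]
        intro h; exact absurd rfl (h i hi)
    have h2 : b i ∈ stdLat := by
      rw [← hb.2]; exact AddSubgroup.subset_closure ⟨i, rfl⟩
    have h3 : b i ≠ 0 := hb.1.ne_zero i
    obtain ⟨x, y, hc, hd, e⟩ := h1
    obtain ⟨p, q, e2⟩ := (mem_stdLat _).1 h2
    have e0 : (b i) 0 = -x - y := by rw [e]; simp; ring
    have e3 : (b i) 0 = p := by rw [e2]; simp
    have hlt : (p : ℝ) < 0 := by
      by_contra hcon
      apply h3
      have hx : x = 0 := by linarith
      have hy : y = 0 := by linarith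
      rw [e, hx, hy]; simp
    have : p < 0 := by exact_mod_cast hlt
    have : p ≤ -1 := by omega
    rw [e3]; exact_mod_cast this
  have hin : ∀ q : ℤ, 0 ≤ q → q ≤ 2 → ∃ i, b i = ![-1, (q : ℝ)] := by
    intro q h1 h2
    apply gen_mem hb hneg
    rw [← he]
    have h1' : (0 : ℝ) ≤ q := by exact_mod_cast h1
    have h2' : (q : ℝ) ≤ 2 := by exact_mod_cast h2
    have : (0 : ℝ) < a := by linarith
    refine ⟨q / a, 1 - q / a, by positivity, ?_, ?_⟩
    · rw [sub_nonneg, div_le_one this]; linarith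
    · have := this.ne'
      ext j; fin_cases j <;> simp <;> field_simp
      ring
  obtain ⟨i, hi⟩ := hin 0 (by norm_num) (by norm_num)
  obtain ⟨j, hj⟩ := hin 1 (by norm_num) (by norm_num)
  obtain ⟨k, hk⟩ := hin 2 (by norm_num) (by norm_num)
  have hij : i ≠ j := by
    rintro rfl; rw [hi] at hj; have := congrFun hj 1; simp at this
  have hjk : j ≠ k := by
    rintro rfl; rw [hj] at hk; have := congrFun hk 1; simp at this
  have := Fintype.linearIndependent_iff.mp hb.1
    (fun l => (Pi.single i 1 + Pi.single k 1 - Pi.single j 2 : Fin d → ℝ) l) (by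
      simp only [Pi.add_apply, Pi.sub_apply, sub_smul, add_smul, Finset.sum_sub_distrib,
        Finset.sum_add_distrib]
      simp [Pi.single_apply, ite_smul, hi, hj, hk]
      norm_num) j
  simp [Pi.single_apply, hij.symm, hjk] at this

/-- for the Hirzebruch surface `F_a`, `a ≥ 2`: the fan `Σ_C` obtained
by adding the rays through `(−1,0)` and `(1,−a)` is a complete centrally symmetric
fan which is not smooth; after inserting the further pairs of rays through
`±(1,−ν)`, `1 ≤ ν < a`, one obtains a smooth complete centrally symmetric fan. -/
theorem stmt19 (a : ℕ) (ha : 2 ≤ a) :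
    (IsFan stdLat (fanOfList (hirzC a)) ∧ FanComplete (fanOfList (hirzC a)) ∧
      CSymm (fanOfList (hirzC a)) ∧
      ¬ ∀ σ ∈ fanOfList (hirzC a), SmoothCone stdLat σ) ∧
    (IsFan stdLat (fanOfList (hirzFull a)) ∧ FanComplete (fanOfList (hirzFull a)) ∧
      CSymm (fanOfList (hirzFull a)) ∧
      (∀ σ ∈ fanOfList (hirzFull a), SmoothCone stdLat σ) ∧
      { s ∈ fanOfList (hirzFull a) | spanDim s = 1 }.ncard = 2 * a + 4) := by
  have A := ext_Anti (m := 3) (by norm_num) (hC_pos a ha)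
  have B := ext_Anti (m := a + 2) (by omega) (hF_pos a)
  have lA := ext_lat (m := 3) (by norm_num) (fun i _ => hC_lat a i)
  have lB := ext_lat (m := a + 2) (by omega) (fun i _ => hF_lat a i)
  rw [ext_list (by norm_num) (hC_pos a ha) _ (hC_list a),
    ext_list (by omega) (hF_pos a) _ (hF_list a)]
  refine ⟨⟨A.isFan lA, A.complete, A.csymm, fun h => ?_⟩,
    ⟨B.isFan lB, B.complete, B.csymm, B.smooth lB ?_, ?_⟩⟩
  · apply not_smooth a ha
    apply h
    right; right
    refine ⟨2, ?_⟩
    rw [show 2 + 1 = 0 + 3 from rfl, ext_anti (by norm_num), ext_lt (by norm_num),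
      ext_lt (by norm_num)]
    simp [hC]
  · exact ext_step (by omega) (by simp [hF]) (fun i hi => hF_step a i hi)
  · rw [B.ncard]; ring
end
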